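/- arXiv:1207.2178 — 2 statements merged into one kernel-verified Lean document; each statement's English description precedes it below -/
import Mathlib

section
/- Let k ≥ 4 be an integer and let G be a finite simple graph on n vertices whose edges are coloured (not necessarily properly) by a colouring c. If every vertex of G has colour degree at least k and n ≥ 4k − 4, then G contains a rainbow matching of size k. -/
/-- A rainbow matching in an edge-coloured graph `(G, c)`: a finite set of edges of `G`
that are pairwise vertex-disjoint and whose colours are pairwise distinct. -/
def IsRainbowMatching {V : Type*} (G : SimpleGraph V) (c : Sym2 V → ℕ)
    (M : Finset (Sym2 V)) : Prop :=
  (∀ e ∈ M, e ∈ G.edgeSet) ∧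
  (∀ e ∈ M, ∀ f ∈ M, e ≠ f → ∀ v : V, ¬(v ∈ e ∧ v ∈ f)) ∧
  (∀ e ∈ M, ∀ f ∈ M, c e = c f → e = f)

/-- The colour degree of a vertex `v`: the number of distinct colours on edges incident
with `v`. -/
noncomputable def colourDegree {V : Type*} (G : SimpleGraph V) (c : Sym2 V → ℕ)
    (v : V) : ℕ :=
  (c '' G.incidenceSet v).ncard

/-!
Let `m < k` be the largest size of a rainbow matching, and among all rainbow matchings `M` of size
`m` and rainbow matchings `E` vertex-disjoint from `M` choose a pair with `E` as large as possible.
Every colour of `E` appears on `M`, for otherwise `M` could be extended; hence one can select one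
edge from `M` or `E` for each colour of `E`, at will, and obtain a rainbow matching.

If `|E| < m`, delete the colours of `E` and the at most `4|E|` vertices of `M ∪ E` in these colours.
In what remains, rainbow matchings of size `ν = m - |E|` miss only independent sets, by
maximality of `E`, and each vertex `x` has `ν + 1` colours `l` such that every matching of size `ν`
avoiding `x` and `l` leaves an edge at `x` of colour `l`, by maximality of `m`. Take an independent
set `W` of size `2ν` and a matching `Q` of size `ν` meeting `W` as often as possible. Growing sets
of edges of `Q` any colour of which can be freed by rerouting along edges from `W`, one finds that
`W` and `Q` cover all the remaining vertices, so there are at most `3ν` of them, not `4ν`.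

If `|E| = m`, an edge in a new colour must join the two edges of `M` and `E` of one common colour,
since any other new edge would extend a selection. So the colours of `E` split the vertices into
classes of size four, and an edge `xy` between different classes has a colour of `E`; one exists
because `k ≥ 4`. Dropping that colour, selecting the other edges away from `xy`, and adding `xy` and
a new edge inside the class of the dropped colour gives a rainbow matching of size `m + 1`.
-/

/-- A rainbow matching with exactly `n` edges; the analogue of `SimpleGraph.IsNClique`. -/
structure IsNRainbowMatching {V : Type*} (G : SimpleGraph V) (c : Sym2 V → ℕ) (n : ℕ)
    (M : Finset (Sym2 V)) : Prop where
  isRainbowMatching : IsRainbowMatching G c M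
  card_eq : M.card = n

/-- The set `V(M)` of endpoints of the edges in `M`. -/
def coveredVerts {V : Type*} [DecidableEq V] (M : Finset (Sym2 V)) : Finset V :=
  M.biUnion Sym2.toFinset

open Finset

section Basic

variable {V : Type*} {G : SimpleGraph V} {c : Sym2 V → ℕ} {M N : Finset (Sym2 V)}
  {e f : Sym2 V} {u v x y : V} {m n : ℕ}

namespace IsRainbowMatching

lemma mono (hM : IsRainbowMatching G c M) (hNM : N ⊆ M) : IsRainbowMatching G c N :=
  ⟨fun e he ↦ hM.1 e (hNM he), fun e he f hf ↦ hM.2.1 e (hNM he) f (hNM hf),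
    fun e he f hf ↦ hM.2.2 e (hNM he) f (hNM hf)⟩

lemma eq_of_mem_of_mem (hM : IsRainbowMatching G c M) (he : e ∈ M) (hf : f ∈ M)
    (hve : v ∈ e) (hvf : v ∈ f) : e = f :=
  not_imp_comm.1 (hM.2.1 e he f hf) fun h ↦ h v ⟨hve, hvf⟩

lemma injOn_colour (hM : IsRainbowMatching G c M) : Set.InjOn c M :=
  fun e he f hf ↦ hM.2.2 e he f hf

lemma card_image_colour (hM : IsRainbowMatching G c M) : (M.image c).card = M.card :=
  card_image_of_injOn hM.injOn_colour

lemma exists_eq_mk_adj (hM : IsRainbowMatching G c M) (he : e ∈ M) (hv : v ∈ e) :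
    ∃ w, e = s(v, w) ∧ G.Adj v w := by
  obtain ⟨w, rfl⟩ := Sym2.mem_iff_exists.1 hv
  exact ⟨w, rfl, hM.1 _ he⟩

lemma notMem_image_erase [DecidableEq V] (hM : IsRainbowMatching G c M) (he : e ∈ M) :
    c e ∉ (M.erase e).image c := by
  intro h
  obtain ⟨f, hf, hfe⟩ := mem_image.1 h
  exact (mem_erase.1 hf).1 (hM.injOn_colour (mem_of_mem_erase hf) he hfe)

lemma isNRainbowMatching (hM : IsRainbowMatching G c M) : IsNRainbowMatching G c M.card M :=
  ⟨hM, rfl⟩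

end IsRainbowMatching

lemma isRainbowMatching_deleteEdges_iff {s : Set (Sym2 V)} :
    IsRainbowMatching (G.deleteEdges s) c M ↔ IsRainbowMatching G c M ∧ ∀ e ∈ M, e ∉ s := by
  simp only [IsRainbowMatching, SimpleGraph.edgeSet_deleteEdges, Set.mem_sdiff, forall_and]
  tauto

lemma IsNRainbowMatching.exists_of_le (hM : IsNRainbowMatching G c n M) (hmn : m ≤ n) :
    ∃ N, IsNRainbowMatching G c m N := by
  obtain ⟨N, hNM, hN⟩ := exists_subset_card_eq (hM.card_eq.symm ▸ hmn)
  exact ⟨N, hM.1.mono hNM, hN⟩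

lemma isNRainbowMatching_singleton (h : G.Adj x y) : IsNRainbowMatching G c 1 {s(x, y)} := by
  refine ⟨⟨?_, ?_, ?_⟩, card_singleton _⟩ <;> simp +contextual [h]

lemma exists_mem_ne_of_mem_edgeSet (he : e ∈ G.edgeSet) (v : V) : ∃ w ∈ e, w ≠ v := by
  induction e with | _ x y =>
  rcases eq_or_ne x v with rfl | hx
  · exact ⟨y, Sym2.mem_mk_right _ _, G.ne_of_adj he.symm⟩
  · exact ⟨x, Sym2.mem_mk_left _ _, hx⟩

variable [DecidableEq V]

@[simp]
lemma mem_coveredVerts : v ∈ coveredVerts M ↔ ∃ e ∈ M, v ∈ e := by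
  simp [coveredVerts]

lemma mem_coveredVerts_of_mem (he : e ∈ M) (hv : v ∈ e) : v ∈ coveredVerts M :=
  mem_coveredVerts.2 ⟨e, he, hv⟩

lemma coveredVerts_mono (h : M ⊆ N) : coveredVerts M ⊆ coveredVerts N :=
  biUnion_subset_biUnion_of_subset_left _ h

lemma coveredVerts_union : coveredVerts (M ∪ N) = coveredVerts M ∪ coveredVerts N :=
  union_biUnion

lemma coveredVerts_singleton_mk : coveredVerts {s(x, y)} = {x, y} := by
  rw [coveredVerts, singleton_biUnion, Sym2.toFinset_mk_eq]

lemma coveredVerts_insert_mk :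
    coveredVerts (insert s(x, y) M) = {x, y} ∪ coveredVerts M := by
  rw [coveredVerts, biUnion_insert, Sym2.toFinset_mk_eq, coveredVerts]

lemma card_coveredVerts_le (M : Finset (Sym2 V)) : (coveredVerts M).card ≤ 2 * M.card := by
  rw [mul_comm]
  refine card_biUnion_le_card_mul _ _ _ fun e _ ↦ ?_
  rw [Sym2.card_toFinset]
  split <;> simp

lemma card_coveredVerts_sdiff_le {W : Finset V} (hM : ∀ e ∈ M, ∃ w ∈ W, w ∈ e) :
    (coveredVerts M \ W).card ≤ M.card := by
  refine card_le_card_of_forall_subsingleton (· ∈ ·) (fun v hv ↦ ?_) fun e he v hv w hw ↦ ?_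
  · exact mem_coveredVerts.1 (mem_sdiff.1 hv).1
  · obtain ⟨z, hzW, hze⟩ := hM e he
    obtain ⟨x, rfl⟩ := Sym2.mem_iff_exists.1 hze
    simp only [mem_sdiff, Sym2.mem_iff, Set.mem_ofPred_eq] at hv hw
    grind

lemma IsRainbowMatching.notMem_coveredVerts_erase (hM : IsRainbowMatching G c M) (he : e ∈ M)
    (hv : v ∈ e) : v ∉ coveredVerts (M.erase e) := by
  intro hv'
  obtain ⟨f, hf, hvf⟩ := mem_coveredVerts.1 hv'
  exact (mem_erase.1 hf).1 (hM.eq_of_mem_of_mem (mem_of_mem_erase hf) he hvf hv)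

namespace IsNRainbowMatching

lemma union (hM : IsNRainbowMatching G c m M) (hN : IsNRainbowMatching G c n N)
    (hV : Disjoint (coveredVerts M) (coveredVerts N))
    (hc : Disjoint (M.image c) (N.image c)) : IsNRainbowMatching G c (m + n) (M ∪ N) := by
  obtain ⟨⟨hMG, hMV, hMc⟩, rfl⟩ := hM
  obtain ⟨⟨hNG, hNV, hNc⟩, rfl⟩ := hN
  simp only [disjoint_left, mem_coveredVerts, mem_image] at hV hc
  refine ⟨⟨?_, ?_, ?_⟩, card_union_of_disjoint (disjoint_left.2 ?_)⟩ <;> grind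

lemma insert_edge (hM : IsNRainbowMatching G c n M) (hxy : G.Adj x y) (hx : x ∉ coveredVerts M)
    (hy : y ∉ coveredVerts M) (hc : c s(x, y) ∉ M.image c) :
    IsNRainbowMatching G c (n + 1) (insert s(x, y) M) := by
  rw [insert_eq, union_comm]
  refine hM.union (isNRainbowMatching_singleton hxy) ?_ ?_
  · rw [coveredVerts_singleton_mk, disjoint_insert_right, disjoint_singleton_right]
    exact ⟨hx, hy⟩
  · simpa using hc

lemma erase (hM : IsNRainbowMatching G c n M) (he : e ∈ M) :
    IsNRainbowMatching G c (n - 1) (M.erase e) :=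
  ⟨hM.1.mono (erase_subset _ _), by rw [card_erase_of_mem he, hM.card_eq]⟩

lemma swap (hM : IsNRainbowMatching G c n M) (he : e ∈ M) (hve : v ∈ e) (huv : G.Adj u v)
    (hu : u ∉ coveredVerts M) (hc : c s(u, v) ∉ M.image c) :
    IsNRainbowMatching G c n (insert s(u, v) (M.erase e)) := by
  have hpos : 0 < n := hM.card_eq ▸ card_pos.2 ⟨e, he⟩
  have hsub : M.erase e ⊆ M := erase_subset _ _
  rw [← Nat.sub_add_cancel hpos]
  exact (hM.erase he).insert_edge huv (fun h ↦ hu (coveredVerts_mono hsub h))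
    (hM.1.notMem_coveredVerts_erase he hve) fun h ↦ hc (image_mono c hsub h)

end IsNRainbowMatching

end Basic

/-- The colour degree of `v` in `ℕ∞`, which stays meaningful when infinitely many colours appear
at `v` (where `colourDegree` has the junk value `0`). -/
noncomputable def colourEDegree {V : Type*} (G : SimpleGraph V) (c : Sym2 V → ℕ) (v : V) : ℕ∞ :=
  (c '' G.incidenceSet v).encard

section ColourDegree

variable {V : Type*} {G : SimpleGraph V} {c : Sym2 V → ℕ} {k : ℕ} {v : V}

lemma coe_colourDegree_le : (colourDegree G c v : ℕ∞) ≤ colourEDegree G c v :=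
  Set.ncard_le_encard _

lemma exists_colours_of_le_colourEDegree (h : (k : ℕ∞) ≤ colourEDegree G c v) :
    ∃ C : Finset ℕ, C.card = k ∧ ∀ l ∈ C, ∃ y, G.Adj v y ∧ c s(v, y) = l := by
  obtain ⟨C, hCsub, hC⟩ := Set.exists_subset_encard_eq h
  lift C to Finset ℕ using Set.finite_of_encard_eq_coe hC
  refine ⟨C, by simpa using hC, fun l hl ↦ ?_⟩
  obtain ⟨e, ⟨he, hve⟩, rfl⟩ := hCsub hl
  obtain ⟨y, rfl⟩ := Sym2.mem_iff_exists.1 hve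
  exact ⟨y, he, rfl⟩

lemma exists_adj_notMem_of_card_lt_colourEDegree {D : Finset ℕ}
    (h : (D.card : ℕ∞) < colourEDegree G c v) : ∃ y, G.Adj v y ∧ c s(v, y) ∉ D := by
  obtain ⟨C, hC, hCv⟩ := exists_colours_of_le_colourEDegree (k := D.card + 1)
    (by exact_mod_cast Order.add_one_le_of_lt h)
  obtain ⟨l, hlC, hlD⟩ := exists_mem_notMem_of_card_lt_card (by omega : D.card < C.card)
  obtain ⟨y, hy, rfl⟩ := hCv l hlC
  exact ⟨y, hy, hlD⟩

lemma exists_neighbors_of_le_colourEDegree (h : (k : ℕ∞) ≤ colourEDegree G c v) :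
    ∃ T : Finset V, k ≤ T.card ∧ ∀ y ∈ T, G.Adj v y := by
  obtain ⟨C, rfl, hCv⟩ := exists_colours_of_le_colourEDegree h
  obtain ⟨T, hT, hTC⟩ := subset_set_image_iff.1 hCv
  exact ⟨T, hTC ▸ card_image_le, hT⟩

end ColourDegree

/-! ### The exchange argument -/

/-- `ν`-criticality of `(H, c)` on a vertex set `X`: the vertices missed by a rainbow matching of
size `ν` span no edge of any colour, and yet each vertex of `X` has `ν + 1` colours, each of which
it can use whenever a rainbow matching of size `ν` leaves both that vertex and that colour free. -/
structure IsRainbowCritical {V : Type*} [DecidableEq V] (H : SimpleGraph V) (c : Sym2 V → ℕ)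
    (ν : ℕ) (X : Finset V) : Prop where
  isIndepSet_compl : ∀ P, IsNRainbowMatching H c ν P → H.IsIndepSet (coveredVerts P : Set V)ᶜ
  exists_colours : ∀ x ∈ X, ∃ C : Finset ℕ, ν + 1 ≤ C.card ∧ ∀ l ∈ C, ∀ P,
    IsNRainbowMatching H c ν P → x ∉ coveredVerts P → l ∉ P.image c → ∃ y, H.Adj x y ∧ c s(x, y) = l

/-- The edges of `P` with an endpoint in `W`. -/
def edgesMeeting {V : Type*} [DecidableEq V] (W : Finset V) (P : Finset (Sym2 V)) :
    Finset (Sym2 V) :=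
  {e ∈ P | ∃ w ∈ W, w ∈ e}

/-- The setting of the exchange argument: an independent set `W ⊆ X` in a critical graph, and a
rainbow matching `Q` of size `ν` with as many edges meeting `W` as possible. -/
structure IsExchangeSetting {V : Type*} [DecidableEq V] (H : SimpleGraph V) (c : Sym2 V → ℕ)
    (ν : ℕ) (X W : Finset V) (Q : Finset (Sym2 V)) : Prop extends
    IsRainbowCritical H c ν X where
  subset : W ⊆ X
  isIndepSet : H.IsIndepSet (W : Set V)
  maximalFor : MaximalFor (IsNRainbowMatching H c ν) (fun P ↦ (edgesMeeting W P).card) Q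

/-- A rerouting of `Q`: a rainbow matching `P`, as good as `Q` with respect to `W`, that avoids the
colour `l`, differs from `Q` only in the edges of `J`, and covers new vertices only in `S`. -/
structure IsRerouting {V : Type*} [DecidableEq V] (H : SimpleGraph V) (c : Sym2 V → ℕ)
    (ν : ℕ) (W : Finset V) (Q J : Finset (Sym2 V)) (S : Finset V) (l : ℕ)
    (P : Finset (Sym2 V)) : Prop where
  isNRainbowMatching : IsNRainbowMatching H c ν P
  notMem_image : l ∉ P.image c
  sdiff_subset : Q \ J ⊆ P
  coveredVerts_subset : coveredVerts P ⊆ coveredVerts Q ∪ S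
  card_edgesMeeting : (edgesMeeting W P).card = (edgesMeeting W Q).card

/-- `J ⊆ Q` is exchangeable through `S`: every colour not on `Q \ J` can be freed by a rerouting
which changes only edges of `J` and uses only new vertices in `S`. -/
structure IsExchangeable {V : Type*} [DecidableEq V] (H : SimpleGraph V) (c : Sym2 V → ℕ)
    (ν : ℕ) (W : Finset V) (Q J : Finset (Sym2 V)) (S : Finset V) : Prop where
  subset : J ⊆ edgesMeeting W Q
  card_le : S.card ≤ J.card
  exists_rerouting : ∀ l ∉ (Q \ J).image c, ∃ P, IsRerouting H c ν W Q J S l P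

section Exchange

variable {V : Type*} [DecidableEq V] {H : SimpleGraph V} {c : Sym2 V → ℕ} {ν l : ℕ}
  {X W S T : Finset V} {P Q J : Finset (Sym2 V)} {e : Sym2 V} {b u v : V}

lemma mem_edgesMeeting : e ∈ edgesMeeting W P ↔ e ∈ P ∧ ∃ w ∈ W, w ∈ e :=
  mem_filter

lemma edgesMeeting_subset : edgesMeeting W P ⊆ P :=
  filter_subset _ _

lemma card_coveredVerts_inter_le (hW : H.IsIndepSet (W : Set V)) (hP : IsRainbowMatching H c P) :
    (coveredVerts P ∩ W).card ≤ (edgesMeeting W P).card := by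
  refine card_le_card_of_forall_subsingleton (· ∈ ·) (fun v hv ↦ ?_) fun e he v hv w hw ↦ ?_
  · obtain ⟨hvP, hvW⟩ := mem_inter.1 hv
    obtain ⟨e, he, hve⟩ := mem_coveredVerts.1 hvP
    exact ⟨e, mem_edgesMeeting.2 ⟨he, v, hvW, hve⟩, hve⟩
  · by_contra hne
    obtain ⟨z, rfl, hvz⟩ := hP.exists_eq_mk_adj (edgesMeeting_subset he) hv.2
    obtain rfl : w = z := (Sym2.mem_iff.1 hw.2).resolve_left (Ne.symm hne)
    exact hW (mem_of_mem_inter_right hv.1) (mem_of_mem_inter_right hw.1) hne hvz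

lemma edgesMeeting_swap (hu : u ∈ W) :
    edgesMeeting W (insert s(u, b) (P.erase e)) =
      insert s(u, b) ((edgesMeeting W P).erase e) := by
  rw [edgesMeeting, filter_insert, if_pos ⟨u, hu, Sym2.mem_mk_left _ _⟩, filter_erase, edgesMeeting]

lemma card_edgesMeeting_swap (hu : u ∈ W) (huP : u ∉ coveredVerts P) :
    (edgesMeeting W (insert s(u, b) (P.erase e))).card =
      ((edgesMeeting W P).erase e).card + 1 := by
  rw [edgesMeeting_swap hu, card_insert_of_notMem]
  exact fun h ↦ huP (mem_coveredVerts_of_mem (edgesMeeting_subset (mem_of_mem_erase h))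
    (Sym2.mem_mk_left _ _))

lemma IsRerouting.notMem_coveredVerts (hP : IsRerouting H c ν W Q J S l P)
    (hvQ : v ∉ coveredVerts Q) (hvS : v ∉ S) : v ∉ coveredVerts P :=
  fun h ↦ (mem_union.1 (hP.coveredVerts_subset h)).elim hvQ hvS

lemma IsRerouting.mono {J' : Finset (Sym2 V)} {S' : Finset V}
    (hP : IsRerouting H c ν W Q J S l P) (hJ : J ⊆ J') (hS : S ⊆ S') :
    IsRerouting H c ν W Q J' S' l P where
  isNRainbowMatching := hP.isNRainbowMatching
  notMem_image := hP.notMem_image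
  sdiff_subset := (sdiff_subset_sdiff Subset.rfl hJ).trans hP.sdiff_subset
  coveredVerts_subset := hP.coveredVerts_subset.trans (union_subset_union_right hS)
  card_edgesMeeting := hP.card_edgesMeeting

lemma IsRerouting.swap (hP : IsRerouting H c ν W Q J S (c s(u, b)) P) (hu : u ∈ W)
    (huP : u ∉ coveredVerts P) (hub : H.Adj u b) (he : e ∈ edgesMeeting W Q) (heJ : e ∉ J)
    (hbe : b ∈ e) :
    IsRerouting H c ν W Q (insert e J) (insert u S) (c e) (insert s(u, b) (P.erase e)) where
  isNRainbowMatching := hP.isNRainbowMatching.swap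
    (hP.sdiff_subset (mem_sdiff.2 ⟨edgesMeeting_subset he, heJ⟩)) hbe hub huP hP.notMem_image
  notMem_image := by
    have heP : e ∈ P := hP.sdiff_subset (mem_sdiff.2 ⟨edgesMeeting_subset he, heJ⟩)
    rw [image_insert, mem_insert, not_or]
    exact ⟨fun h ↦ hP.notMem_image (h ▸ mem_image_of_mem c heP),
      hP.isNRainbowMatching.1.notMem_image_erase heP⟩
  sdiff_subset := by
    rw [sdiff_insert]
    exact (erase_subset_erase e hP.sdiff_subset).trans (subset_insert _ _)
  coveredVerts_subset := by
    rw [coveredVerts_insert_mk]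
    have hb : b ∈ coveredVerts Q := mem_coveredVerts_of_mem (edgesMeeting_subset he) hbe
    have hP' := (coveredVerts_mono (erase_subset e P)).trans hP.coveredVerts_subset
    grind
  card_edgesMeeting := by
    have heP : e ∈ edgesMeeting W P := mem_edgesMeeting.2
      ⟨hP.sdiff_subset (mem_sdiff.2 ⟨edgesMeeting_subset he, heJ⟩), (mem_edgesMeeting.1 he).2⟩
    rw [card_edgesMeeting_swap hu huP, card_erase_add_one heP, hP.card_edgesMeeting]

namespace IsExchangeSetting

lemma mem_coveredVerts_edgesMeeting (hQ : IsExchangeSetting H c ν X W Q)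
    (hJ : J ⊆ edgesMeeting W Q) (hSW : S ⊆ W) (hu : u ∈ W) (huQ : u ∉ coveredVerts Q)
    (huS : u ∉ S) (hP : IsRerouting H c ν W Q J S (c s(u, b)) P) (hub : H.Adj u b) :
    b ∈ coveredVerts (edgesMeeting W Q) := by
  have huP := hP.notMem_coveredVerts huQ huS
  have hbW : b ∉ W := fun hb ↦ hQ.isIndepSet hu hb hub.ne hub
  have hbQ : b ∈ coveredVerts Q := by
    by_contra hbQ
    have hbP := hP.notMem_coveredVerts hbQ fun hb ↦ hbW (hSW hb)
    exact hQ.isIndepSet_compl P hP.isNRainbowMatching huP hbP hub.ne hub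
  obtain ⟨e, he, hbe⟩ := mem_coveredVerts.1 hbQ
  refine mem_coveredVerts_of_mem (mem_edgesMeeting.2 ⟨he, ?_⟩) hbe
  by_contra heW
  have heP : e ∈ P := hP.sdiff_subset
    (mem_sdiff.2 ⟨he, fun h ↦ heW (mem_edgesMeeting.1 (hJ h)).2⟩)
  have hswap := hP.isNRainbowMatching.swap heP hbe hub huP hP.notMem_image
  refine hQ.maximalFor.not_gt hswap ?_
  rw [card_edgesMeeting_swap hu huP,
    erase_eq_of_notMem fun h ↦ heW (mem_edgesMeeting.1 h).2, hP.card_edgesMeeting]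
  exact Nat.lt_succ_self _

lemma exists_neighbors (hQ : IsExchangeSetting H c ν X W Q)
    (hJ : IsExchangeable H c ν W Q J S) (hSW : S ⊆ W) (hu : u ∈ W) (huQ : u ∉ coveredVerts Q)
    (huS : u ∉ S) :
    ∃ T : Finset V, J.card + 1 ≤ T.card ∧ T ⊆ coveredVerts (edgesMeeting W Q) \ W ∧
      ∀ b ∈ T, H.Adj u b ∧ c s(u, b) ∉ (Q \ J).image c := by
  obtain ⟨C, hC, hCu⟩ := hQ.exists_colours u (hQ.subset hu)
  have hsurj : ((C \ (Q \ J).image c : Finset ℕ) : Set ℕ) ⊆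
      (fun b ↦ c s(u, b)) '' {b | H.Adj u b ∧ c s(u, b) ∉ (Q \ J).image c} := by
    intro l hl
    obtain ⟨hlC, hlQ⟩ := mem_sdiff.1 hl
    obtain ⟨P, hP⟩ := hJ.exists_rerouting l hlQ
    obtain ⟨b, hub, rfl⟩ := hCu l hlC P hP.isNRainbowMatching (hP.notMem_coveredVerts huQ huS)
      hP.notMem_image
    exact ⟨b, ⟨hub, hlQ⟩, rfl⟩
  obtain ⟨T, hT, hTC⟩ := subset_set_image_iff.1 hsurj
  refine ⟨T, ?_, fun b hb ↦ mem_sdiff.2 ⟨?_, fun hbW ↦ ?_⟩, hT⟩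
  · have hTcard : (C \ (Q \ J).image c).card ≤ T.card := hTC ▸ card_image_le
    have hCcard := le_card_sdiff ((Q \ J).image c) C
    have hQJ : ((Q \ J).image c).card ≤ (Q \ J).card := card_image_le
    have hQcard := card_sdiff_add_card_eq_card (hJ.subset.trans edgesMeeting_subset)
    have := hQ.maximalFor.prop.card_eq
    omega
  · obtain ⟨P, hP⟩ := hJ.exists_rerouting _ (hT hb).2
    exact hQ.mem_coveredVerts_edgesMeeting hJ.subset hSW hu huQ huS hP (hT hb).1
  · exact hQ.isIndepSet hu hbW (hT hb).1.ne (hT hb).1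

lemma exists_neighbor_notMem_coveredVerts (hQ : IsExchangeSetting H c ν X W Q)
    (hJ : IsExchangeable H c ν W Q J S) (hSW : S ⊆ W) (hu : u ∈ W) (huQ : u ∉ coveredVerts Q)
    (huS : u ∉ S) :
    ∃ b ∈ coveredVerts (edgesMeeting W Q), b ∉ coveredVerts J ∧ H.Adj u b ∧
      c s(u, b) ∉ (Q \ J).image c := by
  obtain ⟨T, hTcard, hTW, hT⟩ := hQ.exists_neighbors hJ hSW hu huQ huS
  have hJcard : (coveredVerts J \ W).card ≤ J.card :=
    card_coveredVerts_sdiff_le fun e he ↦ (mem_edgesMeeting.1 (hJ.subset he)).2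
  obtain ⟨b, hbT, hbJ⟩ := exists_mem_notMem_of_card_lt_card
    (by omega : (coveredVerts J \ W).card < T.card)
  obtain ⟨hbQ, hbW⟩ := mem_sdiff.1 (hTW hbT)
  exact ⟨b, hbQ, fun h ↦ hbJ (mem_sdiff.2 ⟨h, hbW⟩), hT b hbT⟩

lemma exists_isExchangeable_insert (hQ : IsExchangeSetting H c ν X W Q)
    (hJ : IsExchangeable H c ν W Q J S) (hSW : S ⊆ W) (hu : u ∈ W) (huQ : u ∉ coveredVerts Q)
    (huS : u ∉ S) : ∃ J', IsExchangeable H c ν W Q J' (insert u S) := by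
  obtain ⟨b, hbQ, hbJ, hub, hc⟩ :=
    hQ.exists_neighbor_notMem_coveredVerts hJ hSW hu huQ huS
  obtain ⟨e, he, hbe⟩ := mem_coveredVerts.1 hbQ
  have heJ : e ∉ J := fun h ↦ hbJ (mem_coveredVerts_of_mem h hbe)
  refine ⟨insert e J, insert_subset he hJ.subset, ?_, fun l hl ↦ ?_⟩
  · rw [card_insert_of_notMem huS, card_insert_of_notMem heJ]
    exact Nat.succ_le_succ hJ.card_le
  by_cases hlJ : l ∈ (Q \ J).image c
  · obtain ⟨g, hg, rfl⟩ := mem_image.1 hlJ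
    obtain rfl : g = e := by
      by_contra hge
      exact hl (mem_image_of_mem c (by rw [sdiff_insert]; exact mem_erase.2 ⟨hge, hg⟩))
    obtain ⟨P, hP⟩ := hJ.exists_rerouting _ hc
    exact ⟨_, hP.swap hu (hP.notMem_coveredVerts huQ huS) hub he heJ hbe⟩
  · obtain ⟨P, hP⟩ := hJ.exists_rerouting l hlJ
    exact ⟨P, hP.mono (subset_insert _ _) (subset_insert _ _)⟩

lemma exists_isExchangeable (hQ : IsExchangeSetting H c ν X W Q) (hS : S ⊆ W \ coveredVerts Q) :
    ∃ J, IsExchangeable H c ν W Q J S := by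
  induction S using Finset.induction_on with
  | empty =>
    refine ⟨∅, empty_subset _, le_rfl, fun l hl ↦ ⟨Q, hQ.maximalFor.prop, ?_, ?_, ?_, rfl⟩⟩
    · rwa [sdiff_empty] at hl
    · exact sdiff_subset
    · exact subset_union_left
  | insert u S huS ih =>
    obtain ⟨hu, hS⟩ := insert_subset_iff.1 hS
    obtain ⟨J, hJ⟩ := ih hS
    obtain ⟨huW, huQ⟩ := mem_sdiff.1 hu
    exact hQ.exists_isExchangeable_insert hJ (hS.trans sdiff_subset) huW huQ huS

lemma edgesMeeting_eq_and_isExchangeable (hQ : IsExchangeSetting H c ν X W Q)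
    (hW : W.card = 2 * ν) :
    edgesMeeting W Q = Q ∧ (W \ coveredVerts Q).card = ν ∧
      IsExchangeable H c ν W Q Q (W \ coveredVerts Q) := by
  obtain ⟨J, hJ⟩ := hQ.exists_isExchangeable Subset.rfl
  have hinter := card_coveredVerts_inter_le hQ.isIndepSet hQ.maximalFor.prop.1
  have hJmeet := card_le_card hJ.subset
  have hmeet : (edgesMeeting W Q).card ≤ Q.card := card_le_card edgesMeeting_subset
  have hQcard := hQ.maximalFor.prop.card_eq
  have hSJ := hJ.card_le
  have hsplit := card_sdiff_add_card_inter W (coveredVerts Q)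
  rw [inter_comm] at hsplit
  have hJQ : J = Q := eq_of_subset_of_card_le (hJ.subset.trans edgesMeeting_subset) (by omega)
  refine ⟨eq_of_subset_of_card_le edgesMeeting_subset (by omega), by omega, ?_⟩
  rwa [hJQ] at hJ

lemma card_sdiff_le (hQ : IsExchangeSetting H c ν X W Q) (hW : W.card = 2 * ν) :
    (coveredVerts Q \ W).card ≤ ν := by
  have hmeet := (hQ.edgesMeeting_eq_and_isExchangeable hW).1
  rw [← hQ.maximalFor.prop.card_eq]
  exact card_coveredVerts_sdiff_le fun e he ↦ (mem_edgesMeeting.1 (hmeet.symm ▸ he)).2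

lemma adj_of_mem_sdiff (hQ : IsExchangeSetting H c ν X W Q) (hW : W.card = 2 * ν)
    (hu : u ∈ W \ coveredVerts Q) (hb : b ∈ coveredVerts Q \ W) : H.Adj u b := by
  obtain ⟨hmeet, hUcard, -⟩ := hQ.edgesMeeting_eq_and_isExchangeable hW
  have hsub : (W \ coveredVerts Q).erase u ⊆ W \ coveredVerts Q := erase_subset _ _
  obtain ⟨J, hJ⟩ := hQ.exists_isExchangeable hsub
  obtain ⟨huW, huQ⟩ := mem_sdiff.1 hu
  obtain ⟨T, hTcard, hTQ, hT⟩ :=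
    hQ.exists_neighbors hJ (hsub.trans sdiff_subset) huW huQ (notMem_erase _ _)
  rw [hmeet] at hTQ
  have hBcard := hQ.card_sdiff_le hW
  have hJcard := hJ.card_le
  have herase := card_erase_add_one hu
  have hTeq : T = coveredVerts Q \ W := eq_of_subset_of_card_le hTQ (by omega)
  exact (hT b (hTeq ▸ hb)).1

lemma exists_adj_mem_inter (hQ : IsExchangeSetting H c ν X W Q) (hW : W.card = 2 * ν)
    (hv : v ∈ X) (hvW : v ∉ W) (hvQ : v ∉ coveredVerts Q) :
    ∃ w ∈ coveredVerts Q ∩ W, H.Adj v w := by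
  obtain ⟨-, -, hex⟩ := hQ.edgesMeeting_eq_and_isExchangeable hW
  obtain ⟨C, hC, hCv⟩ := hQ.exists_colours v hv
  have hsurj : (C : Set ℕ) ⊆ (fun y ↦ c s(v, y)) '' {y | H.Adj v y} := by
    intro l hl
    obtain ⟨P, hP⟩ := hex.exists_rerouting l (by simp)
    exact hCv l hl P hP.isNRainbowMatching
      (hP.notMem_coveredVerts hvQ fun h ↦ hvW (mem_sdiff.1 h).1) hP.notMem_image
  obtain ⟨T, hT, hTC⟩ := subset_set_image_iff.1 hsurj
  have hTcard : C.card ≤ T.card := hTC ▸ card_image_le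
  have hBcard := hQ.card_sdiff_le hW
  obtain ⟨w, hwT, hwB⟩ := exists_mem_notMem_of_card_lt_card
    (by omega : (coveredVerts Q \ W).card < T.card)
  have hvw : H.Adj v w := hT hwT
  have hwQ : w ∈ coveredVerts Q := by
    by_contra hwQ
    exact hQ.isIndepSet_compl Q hQ.maximalFor.prop hvQ hwQ hvw.ne hvw
  exact ⟨w, mem_inter.2 ⟨hwQ, by_contra fun hwW ↦ hwB (mem_sdiff.2 ⟨hwQ, hwW⟩)⟩, hvw⟩

lemma exists_unused_notMem_coveredVerts (hQ : IsExchangeSetting H c ν X W Q)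
    (hW : W.card = 2 * ν) {w : V} (hw : w ∈ coveredVerts Q ∩ W)
    (hP : IsNRainbowMatching H c ν P) (hwP : w ∈ coveredVerts P) :
    ∃ u ∈ W \ coveredVerts Q, u ∉ coveredVerts P := by
  obtain ⟨-, hUcard, -⟩ := hQ.edgesMeeting_eq_and_isExchangeable hW
  obtain ⟨hwQ, hwW⟩ := mem_inter.1 hw
  by_contra! hU
  have hsub : insert w (W \ coveredVerts Q) ⊆ coveredVerts P ∩ W :=
    insert_subset (mem_inter.2 ⟨hwP, hwW⟩) fun u hu ↦
      mem_inter.2 ⟨hU u hu, (mem_sdiff.1 hu).1⟩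
  have hcard := card_le_card hsub
  rw [card_insert_of_notMem fun h ↦ (mem_sdiff.1 h).2 hwQ] at hcard
  have hinter := card_coveredVerts_inter_le hQ.isIndepSet hP.1
  have hmeet : (edgesMeeting W P).card ≤ P.card := card_le_card edgesMeeting_subset
  have hPcard := hP.card_eq
  omega

lemma mem_union_of_mem (hQ : IsExchangeSetting H c ν X W Q) (hW : W.card = 2 * ν) (hv : v ∈ X) :
    v ∈ W ∪ coveredVerts Q := by
  by_contra hvWQ
  obtain ⟨hvW, hvQ⟩ := not_or.1 (mem_union.not.1 hvWQ)
  obtain ⟨w, hw, hvw⟩ := hQ.exists_adj_mem_inter hW hv hvW hvQ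
  have hwW := mem_of_mem_inter_right hw
  obtain ⟨-, -, hex⟩ := hQ.edgesMeeting_eq_and_isExchangeable hW
  obtain ⟨P, hP⟩ := hex.exists_rerouting (c s(v, w)) (by simp)
  have hPn := hP.isNRainbowMatching
  have hvP := hP.notMem_coveredVerts hvQ fun h ↦ hvW (mem_sdiff.1 h).1
  have hwP : w ∈ coveredVerts P := by
    by_contra hwP
    exact hQ.isIndepSet_compl P hPn hvP hwP hvw.ne hvw
  obtain ⟨e, he, hwe⟩ := mem_coveredVerts.1 hwP
  obtain ⟨b, rfl, hwb⟩ := hPn.1.exists_eq_mk_adj he hwe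
  have hbW : b ∉ W := fun hbW ↦ hQ.isIndepSet hwW hbW hwb.ne hwb
  have hbP : b ∈ coveredVerts P := mem_coveredVerts_of_mem he (Sym2.mem_mk_right _ _)
  have hbQ : b ∈ coveredVerts Q := by
    by_contra hbQ
    exact hP.notMem_coveredVerts hbQ (fun h ↦ hbW (mem_sdiff.1 h).1) hbP
  obtain ⟨u, hu, huP⟩ := hQ.exists_unused_notMem_coveredVerts hW hw hPn hwP
  have hub := hQ.adj_of_mem_sdiff hW hu (mem_sdiff.2 ⟨hbQ, hbW⟩)
  have hP' := hPn.swap he hwe hvw hvP hP.notMem_image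
  have hbe := hPn.1.notMem_coveredVerts_erase he (Sym2.mem_mk_right w b)
  refine hQ.isIndepSet_compl _ hP' ?_ ?_ hub.ne hub
  · have huW := (mem_sdiff.1 hu).1
    have huP' := fun h ↦ huP (coveredVerts_mono (erase_subset s(w, b) P) h)
    simp only [coveredVerts_insert_mk, Set.mem_compl_iff, mem_coe]
    grind
  · simp only [coveredVerts_insert_mk, Set.mem_compl_iff, mem_coe]
    grind

end IsExchangeSetting

theorem IsRainbowCritical.not_isNRainbowMatching (hX : IsRainbowCritical H c ν X) (hν : 0 < ν)
    (hXcard : 4 * ν ≤ X.card) : ¬ IsNRainbowMatching H c ν P := by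
  intro hP
  have hPcard := card_coveredVerts_le P
  have hsdiff := le_card_sdiff (coveredVerts P) X
  rw [hP.card_eq] at hPcard
  obtain ⟨W, hWX, hW⟩ := exists_subset_card_eq (by omega : 2 * ν ≤ (X \ coveredVerts P).card)
  have hWindep : H.IsIndepSet (W : Set V) := (hX.isIndepSet_compl P hP).mono
    fun w hw ↦ (mem_sdiff.1 (hWX hw)).2
  have hfin : ((fun R ↦ (edgesMeeting W R).card) '' {R | IsNRainbowMatching H c ν R}).Finite := by
    refine (Set.finite_le_nat ν).subset (Set.image_subset_iff.2 fun R hR ↦ ?_)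
    exact (card_le_card edgesMeeting_subset).trans_eq hR.card_eq
  obtain ⟨Q, hQ⟩ := hfin.exists_maximalFor' _ _ ⟨P, hP⟩
  have hset : IsExchangeSetting H c ν X W Q := ⟨hX, hWX.trans sdiff_subset, hWindep, hQ⟩
  have hXsub : X ⊆ W ∪ (coveredVerts Q \ W) := by
    rw [union_sdiff_self_eq_union]
    exact fun v hv ↦ hset.mem_union_of_mem hW hv
  have hBcard := hset.card_sdiff_le hW
  have hcard := (card_le_card hXsub).trans (card_union_le _ _)
  omega

end Exchange

/-! ### Transversals of two disjoint rainbow matchings -/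

section Transversal

variable {V : Type*} [DecidableEq V] {G : SimpleGraph V} {c : Sym2 V → ℕ} {e f : Sym2 V} {v : V}
  {M E : Finset (Sym2 V)} {Z : Finset V}

lemma notMem_of_disjoint_coveredVerts (h : Disjoint (coveredVerts M) (coveredVerts E)) (he : e ∈ M)
    (hf : f ∈ E) (hve : v ∈ e) : v ∉ f :=
  fun hvf ↦ disjoint_left.1 h (mem_coveredVerts_of_mem he hve) (mem_coveredVerts_of_mem hf hvf)

lemma eq_of_mem_union_of_mem (hM : IsRainbowMatching G c M) (hE : IsRainbowMatching G c E)
    (hME : Disjoint (coveredVerts M) (coveredVerts E)) (he : e ∈ M ∪ E) (hf : f ∈ M ∪ E)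
    (hve : v ∈ e) (hvf : v ∈ f) : e = f := by
  rcases mem_union.1 he with heM | heE <;> rcases mem_union.1 hf with hfM | hfE
  · exact hM.eq_of_mem_of_mem heM hfM hve hvf
  · exact absurd hvf (notMem_of_disjoint_coveredVerts hME heM hfE hve)
  · exact absurd hve (notMem_of_disjoint_coveredVerts hME hfM heE hvf)
  · exact hE.eq_of_mem_of_mem heE hfE hve hvf

lemma exists_transversal (hM : IsRainbowMatching G c M) (hE : IsRainbowMatching G c E)
    (hME : Disjoint (coveredVerts M) (coveredVerts E)) (hc : E.image c ⊆ M.image c)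
    (hZ : ∀ e ∈ M, ∀ f ∈ E, c e = c f → (∀ z ∈ Z, z ∉ e) ∨ ∀ z ∈ Z, z ∉ f) :
    ∃ S ⊆ M ∪ E, IsNRainbowMatching G c E.card S ∧ S.image c = E.image c ∧
      ∀ z ∈ Z, z ∉ coveredVerts S := by
  have hex : ∀ f ∈ E, ∃ g ∈ M ∪ E, c g = c f ∧ ∀ z ∈ Z, z ∉ g := by
    intro f hf
    obtain ⟨e, he, hef⟩ := mem_image.1 (hc (mem_image_of_mem c hf))
    rcases hZ e he f hf hef with h | h
    · exact ⟨e, mem_union_left _ he, hef, h⟩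
    · exact ⟨f, mem_union_right _ hf, rfl, h⟩
  choose! g hg hgc hgZ using hex
  have hcolour : (E.image g).image c = E.image c := by
    rw [image_image]
    exact image_congr fun f hf ↦ hgc f hf
  refine ⟨E.image g, image_subset_iff.2 hg, ⟨⟨?_, ?_, ?_⟩, ?_⟩, hcolour, ?_⟩
  · simp only [forall_mem_image]
    exact fun f hf ↦ (mem_union.1 (hg f hf)).elim (hM.1 _) (hE.1 _)
  · simp only [forall_mem_image]
    exact fun e he f hf hne v hv ↦
      hne (eq_of_mem_union_of_mem hM hE hME (hg e he) (hg f hf) hv.1 hv.2)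
  · simp only [forall_mem_image]
    intro e he f hf h
    rw [hgc e he, hgc f hf] at h
    rw [hE.injOn_colour he hf h]
  · refine le_antisymm card_image_le ?_
    rw [← hE.card_image_colour, ← hcolour]
    exact card_image_le
  · intro z hz hzS
    obtain ⟨_, he, hze⟩ := mem_coveredVerts.1 hzS
    obtain ⟨f, hf, rfl⟩ := mem_image.1 he
    exact hgZ f hf z hz hze

end Transversal

/-- Vertex-disjoint rainbow matchings `M` of size `m` and `E`, where `m` is the largest size of a
rainbow matching and `E` is as large as possible for any choice of `M`. -/
structure IsExtremalPair {V : Type*} [DecidableEq V] (G : SimpleGraph V) (c : Sym2 V → ℕ)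
    (m : ℕ) (M E : Finset (Sym2 V)) : Prop where
  left : IsNRainbowMatching G c m M
  right : IsRainbowMatching G c E
  disjoint : Disjoint (coveredVerts M) (coveredVerts E)
  not_succ : ∀ P, ¬ IsNRainbowMatching G c (m + 1) P
  card_le : ∀ P F, IsNRainbowMatching G c m P → IsRainbowMatching G c F →
    Disjoint (coveredVerts P) (coveredVerts F) → F.card ≤ E.card

namespace IsExtremalPair

variable {V : Type*} [DecidableEq V] {G : SimpleGraph V} {c : Sym2 V → ℕ} {m : ℕ}
  {M E P S : Finset (Sym2 V)} {X : Finset V} {x y : V}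

lemma image_subset (h : IsExtremalPair G c m M E) : E.image c ⊆ M.image c := by
  intro l hl
  by_contra hlM
  obtain ⟨e, he, rfl⟩ := mem_image.1 hl
  induction e with | _ x y =>
  exact h.not_succ _ (h.left.insert_edge (h.right.1 _ he)
    (fun hx ↦ disjoint_left.1 h.disjoint hx (mem_coveredVerts_of_mem he (Sym2.mem_mk_left _ _)))
    (fun hy ↦ disjoint_left.1 h.disjoint hy (mem_coveredVerts_of_mem he (Sym2.mem_mk_right _ _)))
    hlM)

lemma right_card_le (h : IsExtremalPair G c m M E) : E.card ≤ m := by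
  rw [← h.left.card_eq, ← h.left.1.card_image_colour, ← h.right.card_image_colour]
  exact card_le_card h.image_subset

end IsExtremalPair

/-! ### Extremal pairs of different sizes -/

/-- The edges of `M` whose colour also appears on `E`. -/
def sharedEdges {V : Type*} (c : Sym2 V → ℕ) (M E : Finset (Sym2 V)) : Finset (Sym2 V) :=
  {e ∈ M | c e ∈ E.image c}

/-- The vertices of the edges of `M` and `E` in their common colours. -/
def sharedVerts {V : Type*} [DecidableEq V] (c : Sym2 V → ℕ) (M E : Finset (Sym2 V)) : Finset V :=
  coveredVerts (sharedEdges c M E ∪ E)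

/-- What is left of `G` after removing all edges that have a colour of `E` or meet
`sharedVerts c M E`; this is the graph to which the exchange argument applies. -/
def residualGraph {V : Type*} [DecidableEq V] (G : SimpleGraph V) (c : Sym2 V → ℕ)
    (M E : Finset (Sym2 V)) : SimpleGraph V :=
  G.deleteEdges {e | c e ∈ E.image c ∨ ∃ v ∈ e, v ∈ sharedVerts c M E}

section Residual

variable {V : Type*} {G : SimpleGraph V} {c : Sym2 V → ℕ} {ν : ℕ}
  {M E P : Finset (Sym2 V)} {x y : V}

lemma sharedEdges_subset : sharedEdges c M E ⊆ M :=
  filter_subset _ _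

variable [DecidableEq V]

lemma residualGraph_adj : (residualGraph G c M E).Adj x y ↔
    G.Adj x y ∧ c s(x, y) ∉ E.image c ∧ x ∉ sharedVerts c M E ∧ y ∉ sharedVerts c M E := by
  simp [residualGraph, SimpleGraph.deleteEdges_adj]

lemma disjoint_coveredVerts_sharedVerts
    (hP : IsNRainbowMatching (residualGraph G c M E) c ν P) :
    Disjoint (coveredVerts P) (sharedVerts c M E) := by
  refine disjoint_left.2 fun v hvP hv ↦ ?_
  obtain ⟨e, he, hve⟩ := mem_coveredVerts.1 hvP
  exact (isRainbowMatching_deleteEdges_iff.1 hP.1).2 e he (Or.inr ⟨v, hve, hv⟩)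

end Residual

namespace IsExtremalPair

variable {V : Type*} [DecidableEq V] {G : SimpleGraph V} {c : Sym2 V → ℕ} {m : ℕ}
  {M E P S : Finset (Sym2 V)} {X : Finset V} {x y : V}

lemma image_sharedEdges (h : IsExtremalPair G c m M E) :
    (sharedEdges c M E).image c = E.image c := by
  refine Subset.antisymm (image_subset_iff.2 fun e he ↦ (mem_filter.1 he).2) fun l hl ↦ ?_
  obtain ⟨e, he, rfl⟩ := mem_image.1 (h.image_subset hl)
  exact mem_image_of_mem c (mem_filter.2 ⟨he, hl⟩)

lemma isNRainbowMatching_sharedEdges (h : IsExtremalPair G c m M E) :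
    IsNRainbowMatching G c E.card (sharedEdges c M E) := by
  have hshared : IsRainbowMatching G c (sharedEdges c M E) := h.left.1.mono sharedEdges_subset
  refine ⟨hshared, ?_⟩
  rw [← hshared.card_image_colour, h.image_sharedEdges, h.right.card_image_colour]

lemma disjoint_sharedEdges (h : IsExtremalPair G c m M E) :
    Disjoint (coveredVerts (sharedEdges c M E)) (coveredVerts E) :=
  h.disjoint.mono_left (coveredVerts_mono sharedEdges_subset)

lemma card_sharedVerts_le (h : IsExtremalPair G c m M E) :
    (sharedVerts c M E).card ≤ 4 * E.card := by
  have hunion := card_union_le (sharedEdges c M E) E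
  have hcover : (sharedVerts c M E).card ≤ 2 * (sharedEdges c M E ∪ E).card :=
    card_coveredVerts_le _
  rw [h.isNRainbowMatching_sharedEdges.card_eq] at hunion
  omega

lemma isNRainbowMatching_residualGraph_sdiff (h : IsExtremalPair G c m M E) :
    IsNRainbowMatching (residualGraph G c M E) c (m - E.card) (M \ sharedEdges c M E) := by
  have hsub : M \ sharedEdges c M E ⊆ M := sdiff_subset
  refine ⟨isRainbowMatching_deleteEdges_iff.2 ⟨h.left.1.mono hsub, fun e he ↦ ?_⟩, ?_⟩
  · obtain ⟨heM, heS⟩ := mem_sdiff.1 he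
    rintro (hc | ⟨v, hve, hv⟩)
    · exact heS (mem_filter.2 ⟨heM, hc⟩)
    obtain ⟨f, hf, hvf⟩ := mem_coveredVerts.1 hv
    rcases mem_union.1 hf with hf | hf
    · exact heS (h.left.1.eq_of_mem_of_mem heM (mem_filter.1 hf).1 hve hvf ▸ hf)
    · exact notMem_of_disjoint_coveredVerts h.disjoint heM hf hve hvf
  · rw [card_sdiff_of_subset sharedEdges_subset, h.left.card_eq,
      h.isNRainbowMatching_sharedEdges.card_eq]

lemma union_of_residualGraph (h : IsExtremalPair G c m M E)
    (hP : IsNRainbowMatching (residualGraph G c M E) c (m - E.card) P)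
    (hS : IsNRainbowMatching G c E.card S) (hSsub : S ⊆ sharedEdges c M E ∪ E)
    (hSc : S.image c = E.image c) : IsNRainbowMatching G c m (P ∪ S) := by
  obtain ⟨hPG, hPdel⟩ := isRainbowMatching_deleteEdges_iff.1 hP.1
  rw [← Nat.sub_add_cancel h.right_card_le]
  refine IsNRainbowMatching.union ⟨hPG, hP.card_eq⟩ hS
    ((disjoint_coveredVerts_sharedVerts hP).mono_right (coveredVerts_mono hSsub)) ?_
  rw [hSc, disjoint_left, forall_mem_image]
  exact fun e he hc ↦ hPdel e he (Or.inl hc)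

lemma isIndepSet_residualGraph (h : IsExtremalPair G c m M E)
    (hP : IsNRainbowMatching (residualGraph G c M E) c (m - E.card) P) :
    (residualGraph G c M E).IsIndepSet (coveredVerts P : Set V)ᶜ := by
  intro x hxP y hyP _ hxy
  obtain ⟨hxyG, hc, hx, hy⟩ := residualGraph_adj.1 hxy
  have hPK := disjoint_coveredVerts_sharedVerts hP
  have hEK : coveredVerts E ⊆ sharedVerts c M E := coveredVerts_mono subset_union_right
  have hSK : coveredVerts (sharedEdges c M E) ⊆ sharedVerts c M E :=
    coveredVerts_mono subset_union_left
  have hF := h.right.isNRainbowMatching.insert_edge hxyG (fun hxE ↦ hx (hEK hxE))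
    (fun hyE ↦ hy (hEK hyE)) hc
  have hPS := h.union_of_residualGraph hP h.isNRainbowMatching_sharedEdges subset_union_left
    h.image_sharedEdges
  have hcard := h.card_le _ _ hPS hF.1 <| by
    rw [coveredVerts_union, coveredVerts_insert_mk, disjoint_union_left, disjoint_union_right,
      disjoint_union_right]
    simp only [disjoint_insert_right, disjoint_singleton_right]
    exact ⟨⟨⟨hxP, hyP⟩, hPK.mono_right hEK⟩,
      ⟨fun hxS ↦ hx (hSK hxS), fun hyS ↦ hy (hSK hyS)⟩, h.disjoint_sharedEdges⟩
  rw [hF.card_eq] at hcard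
  omega

/-- If the far end `y` lay in `sharedVerts c M E`, a transversal of the shared colours avoiding `y`
would leave room for the edge `xy`. -/
lemma residualGraph_adj_of_notMem (h : IsExtremalPair G c m M E)
    (hP : IsNRainbowMatching (residualGraph G c M E) c (m - E.card) P) (hxy : G.Adj x y)
    (hx : x ∉ sharedVerts c M E) (hxP : x ∉ coveredVerts P)
    (hcE : c s(x, y) ∉ E.image c) (hcP : c s(x, y) ∉ P.image c) :
    (residualGraph G c M E).Adj x y := by
  refine residualGraph_adj.2 ⟨hxy, hcE, hx, fun hy ↦ ?_⟩
  obtain ⟨S, hSsub, hS, hSc, hyS⟩ := exists_transversal (Z := {y})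
    h.isNRainbowMatching_sharedEdges.1 h.right h.disjoint_sharedEdges h.image_sharedEdges.ge
    fun e he f hf _ ↦ by
      simp only [mem_singleton, forall_eq]
      exact or_iff_not_imp_left.2 fun hye ↦
        notMem_of_disjoint_coveredVerts h.disjoint_sharedEdges he hf (not_not.1 hye)
  have hyP := disjoint_right.1 (disjoint_coveredVerts_sharedVerts hP) hy
  refine h.not_succ _ ((h.union_of_residualGraph hP hS hSsub hSc).insert_edge hxy ?_ ?_ ?_)
  · rw [coveredVerts_union, mem_union, not_or]
    exact ⟨hxP, fun hxS ↦ hx (coveredVerts_mono hSsub hxS)⟩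
  · rw [coveredVerts_union, mem_union, not_or]
    exact ⟨hyP, hyS y (mem_singleton_self y)⟩
  · rw [image_union, mem_union, not_or, hSc]
    exact ⟨hcP, hcE⟩

lemma isRainbowCritical_residualGraph (h : IsExtremalPair G c m M E)
    (hdeg : ∀ v, (m : ℕ∞) < colourEDegree G c v) (hX : Disjoint X (sharedVerts c M E)) :
    IsRainbowCritical (residualGraph G c M E) c (m - E.card) X where
  isIndepSet_compl _ hP := h.isIndepSet_residualGraph hP
  exists_colours x hx := by
    obtain ⟨C, hC, hCx⟩ := exists_colours_of_le_colourEDegree (k := m + 1)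
      (by exact_mod_cast Order.add_one_le_of_lt (hdeg x))
    refine ⟨C \ E.image c, ?_, fun l hl P hP hxP hlP ↦ ?_⟩
    · have hsdiff := le_card_sdiff (E.image c) C
      rw [h.right.card_image_colour] at hsdiff
      have := h.right_card_le
      omega
    · obtain ⟨hlC, hlE⟩ := mem_sdiff.1 hl
      obtain ⟨y, hxy, rfl⟩ := hCx l hlC
      exact ⟨y, h.residualGraph_adj_of_notMem hP hxy (disjoint_left.1 hX hx) hxP hlE hlP, rfl⟩

lemma le_card_right (h : IsExtremalPair G c m M E) (hdeg : ∀ v, (m : ℕ∞) < colourEDegree G c v)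
    (hV : ((4 * m : ℕ) : ℕ∞) ≤ ENat.card V) : m ≤ E.card := by
  by_contra! hlt
  rw [← Set.encard_univ] at hV
  obtain ⟨X, -, hX⟩ := Set.exists_subset_encard_eq hV
  lift X to Finset V using Set.finite_of_encard_eq_coe hX
  have hXcard : X.card = 4 * m := by exact_mod_cast hX
  have hsdiff := le_card_sdiff (sharedVerts c M E) X
  have hK := h.card_sharedVerts_le
  have hcrit := h.isRainbowCritical_residualGraph (X := X \ sharedVerts c M E) hdeg sdiff_disjoint
  exact hcrit.not_isNRainbowMatching (by omega) (by omega)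
    h.isNRainbowMatching_residualGraph_sdiff

end IsExtremalPair

/-! ### Extremal pairs of equal size -/

/-- A map `p` sending each vertex to the colour of the edge of `M ∪ E` that covers it, where every
edge of a colour not on `E` joins the edge of `M` and the edge of `E` of one and the same colour.
The fibres of `p` have at most four elements, so colour degrees at least `4` force edges between
different fibres. -/
structure IsPairColouring {V : Type*} [DecidableEq V] (G : SimpleGraph V) (c : Sym2 V → ℕ)
    (M E : Finset (Sym2 V)) (p : V → ℕ) : Prop where
  exists_mem : ∀ v, ∃ e ∈ M ∪ E, v ∈ e
  colour_eq : ∀ e ∈ M ∪ E, ∀ v ∈ e, c e = p v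
  eq_of_adj : ∀ x y, G.Adj x y → c s(x, y) ∉ E.image c → p x = p y
  notMem_of_adj : ∀ x y, G.Adj x y → c s(x, y) ∉ E.image c → ∀ e ∈ M ∪ E, x ∈ e → y ∉ e

namespace IsExtremalPair

variable {V : Type*} [DecidableEq V] {G : SimpleGraph V} {c : Sym2 V → ℕ} {m : ℕ}
  {M E : Finset (Sym2 V)} {x y : V}

/-- Otherwise a transversal of all the colours avoiding both ends would be enlarged by `xy`. -/
lemma exists_ne_of_adj (h : IsExtremalPair G c m M E) (hE : E.card = m) (hxy : G.Adj x y)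
    (hc : c s(x, y) ∉ E.image c) :
    ∃ e ∈ M ∪ E, ∃ f ∈ M ∪ E, e ≠ f ∧ c e = c f ∧ x ∈ e ∧ y ∈ f := by
  by_contra! hcross
  obtain ⟨S, -, hS, hSc, hZS⟩ := exists_transversal (Z := {x, y}) h.left.1 h.right h.disjoint
    h.image_subset fun e he f hf hef ↦ by
      have he' : e ∈ M ∪ E := mem_union_left _ he
      have hf' : f ∈ M ∪ E := mem_union_right _ hf
      have hxef := notMem_of_disjoint_coveredVerts (v := x) h.disjoint he hf
      have hyef := notMem_of_disjoint_coveredVerts (v := y) h.disjoint he hf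
      simp only [mem_insert, mem_singleton, forall_eq_or_imp, forall_eq]
      grind
  refine h.not_succ _ ((hE ▸ hS).insert_edge hxy (hZS x ?_) (hZS y ?_) (hSc ▸ hc)) <;> simp

lemma exists_isPairColouring (h : IsExtremalPair G c m M E) (hE : E.card = m)
    (hdeg : ∀ v, (m : ℕ∞) < colourEDegree G c v) : ∃ p, IsPairColouring G c M E p := by
  have hcover : ∀ v, ∃ e ∈ M ∪ E, v ∈ e := by
    intro v
    obtain ⟨y, hvy, hc⟩ := exists_adj_notMem_of_card_lt_colourEDegree (D := E.image c)
      (by rw [h.right.card_image_colour, hE]; exact hdeg v)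
    obtain ⟨e, he, -, -, -, -, hve, -⟩ := h.exists_ne_of_adj hE hvy hc
    exact ⟨e, he, hve⟩
  choose g hg hvg using hcover
  have hg_eq : ∀ e ∈ M ∪ E, ∀ v ∈ e, e = g v := fun e he v hv ↦
    eq_of_mem_union_of_mem h.left.1 h.right h.disjoint he (hg v) hv (hvg v)
  refine ⟨fun v ↦ c (g v), fun v ↦ ⟨g v, hg v, hvg v⟩,
    fun e he v hv ↦ congrArg c (hg_eq e he v hv), fun x y hxy hc ↦ ?_,
    fun x y hxy hc e he hxe hye ↦ ?_⟩
  · obtain ⟨e, he, f, hf, -, hef, hxe, hyf⟩ := h.exists_ne_of_adj hE hxy hc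
    rw [← hg_eq e he x hxe, ← hg_eq f hf y hyf, hef]
  · obtain ⟨e', he', f', hf', hne, -, hxe', hyf'⟩ := h.exists_ne_of_adj hE hxy hc
    refine hne ?_
    rw [hg_eq e' he' x hxe', hg_eq f' hf' y hyf', ← hg_eq e he x hxe, ← hg_eq e he y hye]

end IsExtremalPair

namespace IsPairColouring

variable {V : Type*} [DecidableEq V] {G : SimpleGraph V} {c : Sym2 V → ℕ} {M E : Finset (Sym2 V)}
  {p : V → ℕ} {l : ℕ} {e f : Sym2 V} {w x y z : V}

lemma exists_adj_ne (hp : IsPairColouring G c M E p) (hM : IsRainbowMatching G c M)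
    (hE : IsRainbowMatching G c E) (hdeg : 4 ≤ colourEDegree G c x) :
    ∃ y, G.Adj x y ∧ p x ≠ p y := by
  obtain ⟨T, hTcard, hT⟩ := exists_neighbors_of_le_colourEDegree (k := 4) hdeg
  by_contra! hsame
  have hfilter : ∀ N : Finset (Sym2 V), IsRainbowMatching G c N →
      ({e ∈ N | c e = p x} : Finset (Sym2 V)).card ≤ 1 := by
    refine fun N hN ↦ card_le_one.2 fun e he f hf ↦ ?_
    obtain ⟨heN, hep⟩ := mem_filter.1 he
    obtain ⟨hfN, hfp⟩ := mem_filter.1 hf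
    exact hN.injOn_colour heN hfN (hep.trans hfp.symm)
  have hsub : insert x T ⊆ coveredVerts {e ∈ M ∪ E | c e = p x} := by
    intro v hv
    have hpv : p x = p v := (mem_insert.1 hv).elim (fun h ↦ h ▸ rfl) fun h ↦ hsame v (hT v h)
    obtain ⟨e, he, hve⟩ := hp.exists_mem v
    exact mem_coveredVerts_of_mem
      (mem_filter.2 ⟨he, (hp.colour_eq e he v hve).trans hpv.symm⟩) hve
  have hcard := (card_le_card hsub).trans (card_coveredVerts_le _)
  rw [card_insert_of_notMem fun hx ↦ (hT x hx).ne rfl, filter_union] at hcard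
  have hunion := card_union_le {e ∈ M | c e = p x} {e ∈ E | c e = p x}
  have hMcard := hfilter M hM
  have hEcard := hfilter E hE
  omega

lemma exists_new_edge (hp : IsPairColouring G c M E p) (hM : IsRainbowMatching G c M)
    (hE : IsRainbowMatching G c E) (hdeg : ∀ v, (E.card : ℕ∞) < colourEDegree G c v)
    (hl : l ∈ E.image c) (q : V) :
    ∃ z w, G.Adj z w ∧ c s(z, w) ∉ E.image c ∧ p z = l ∧ p w = l ∧ z ≠ q ∧ w ≠ q := by
  obtain ⟨g, hg, hgl, hgq⟩ : ∃ g ∈ M ∪ E, c g = l ∧ (p q = l → q ∈ g) := by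
    obtain ⟨e, he, hqe⟩ := hp.exists_mem q
    by_cases hq : p q = l
    · exact ⟨e, he, (hp.colour_eq e he q hqe).trans hq, fun _ ↦ hqe⟩
    · obtain ⟨f, hf, hfl⟩ := mem_image.1 hl
      exact ⟨f, mem_union_right _ hf, hfl, fun h ↦ absurd h hq⟩
  obtain ⟨z, hzg, hzq⟩ := exists_mem_ne_of_mem_edgeSet ((mem_union.1 hg).elim (hM.1 g) (hE.1 g)) q
  obtain ⟨w, hzw, hc⟩ := exists_adj_notMem_of_card_lt_colourEDegree
    (hE.card_image_colour.symm ▸ hdeg z)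
  have hpz : p z = l := (hp.colour_eq g hg z hzg).symm.trans hgl
  have hpw : p w = l := (hp.eq_of_adj z w hzw hc).symm.trans hpz
  refine ⟨z, w, hzw, hc, hpz, hpw, hzq, ?_⟩
  rintro rfl
  exact hp.notMem_of_adj z w hzw hc g hg hzg (hgq hpw)

lemma exists_new_edge_notMem_pair (hp : IsPairColouring G c M E p)
    (hM : IsRainbowMatching G c M) (hE : IsRainbowMatching G c E)
    (hdeg : ∀ v, (E.card : ℕ∞) < colourEDegree G c v) (hl : l ∈ E.image c) (hxy : p x ≠ p y) :
    ∃ z w, G.Adj z w ∧ c s(z, w) ∉ E.image c ∧ p z = l ∧ p w = l ∧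
      z ∉ ({x, y} : Finset V) ∧ w ∉ ({x, y} : Finset V) := by
  wlog hy : p y ≠ l generalizing x y
  · rw [pair_comm]
    exact this hxy.symm fun hx ↦ hxy (hx.trans (not_not.1 hy).symm)
  obtain ⟨z, w, hzw, hc, hz, hw, hzx, hwx⟩ := hp.exists_new_edge hM hE hdeg hl x
  refine ⟨z, w, hzw, hc, hz, hw, ?_, ?_⟩ <;> grind

lemma forall_notMem_or_forall_notMem (hp : IsPairColouring G c M E p)
    (hME : Disjoint (coveredVerts M) (coveredVerts E)) (hxy : p x ≠ p y) (hz : p z = l)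
    (hw : p w = l) (he : e ∈ M) (hf : f ∈ E) (hef : c e = c f) (hfl : c f ≠ l) :
    (∀ v ∈ ({x, y, z, w} : Finset V), v ∉ e) ∨ ∀ v ∈ ({x, y, z, w} : Finset V), v ∉ f := by
  have hpe := hp.colour_eq e (mem_union_left _ he)
  have hpf := hp.colour_eq f (mem_union_right _ hf)
  have hxef := notMem_of_disjoint_coveredVerts (v := x) hME he hf
  have hyef := notMem_of_disjoint_coveredVerts (v := y) hME he hf
  simp only [mem_insert, mem_singleton, forall_eq_or_imp, forall_eq]
  grind

end IsPairColouring

lemma IsExtremalPair.card_right_ne {V : Type*} [DecidableEq V] [Nonempty V] {G : SimpleGraph V}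
    {c : Sym2 V → ℕ} {m : ℕ} {M E : Finset (Sym2 V)} (h : IsExtremalPair G c m M E)
    (hdeg : ∀ v, (m : ℕ∞) < colourEDegree G c v) (hdeg4 : ∀ v, 4 ≤ colourEDegree G c v) :
    E.card ≠ m := by
  rintro rfl
  obtain ⟨p, hp⟩ := h.exists_isPairColouring rfl hdeg
  obtain ⟨x⟩ := ‹Nonempty V›
  obtain ⟨y, hxy, hpxy⟩ := hp.exists_adj_ne h.left.1 h.right (hdeg4 x)
  have hcE : c s(x, y) ∈ E.image c := by_contra fun hc ↦ hpxy (hp.eq_of_adj x y hxy hc)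
  obtain ⟨e, he, hec⟩ := mem_image.1 hcE
  obtain ⟨z, w, hzw, hnew, hpz, hpw, hz, hw⟩ :=
    hp.exists_new_edge_notMem_pair h.left.1 h.right hdeg (hec ▸ hcE) hpxy
  obtain ⟨S, -, hS, hSc, hZS⟩ := exists_transversal (E := E.erase e) (Z := {x, y, z, w}) h.left.1
    (h.right.mono (erase_subset _ _)) (h.disjoint.mono_right (coveredVerts_mono (erase_subset _ _)))
    ((image_mono c (erase_subset _ _)).trans h.image_subset) fun g hg f hf hgf ↦ by
      obtain ⟨hfe, hfE⟩ := mem_erase.1 hf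
      exact hp.forall_notMem_or_forall_notMem h.disjoint hpxy hpz hpw hg hfE hgf
        fun hc ↦ hfe (h.right.injOn_colour hfE he hc)
  have hcS : c s(x, y) ∉ S.image c := hSc ▸ hec ▸ h.right.notMem_image_erase he
  have hS' := hS.insert_edge hxy (hZS x (by simp)) (hZS y (by simp)) hcS
  rw [card_erase_add_one he] at hS'
  refine h.not_succ _ (hS'.insert_edge hzw ?_ ?_ ?_)
  · rw [coveredVerts_insert_mk]
    have := hZS z (by simp)
    grind
  · rw [coveredVerts_insert_mk]
    have := hZS w (by simp)
    grind
  · rw [image_insert, hSc]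
    have := image_mono c (erase_subset e E)
    grind

lemma exists_isExtremalPair {V : Type*} [DecidableEq V] {G : SimpleGraph V} {c : Sym2 V → ℕ}
    {m : ℕ} {M : Finset (Sym2 V)} (hM : IsNRainbowMatching G c m M)
    (hsucc : ∀ P, ¬ IsNRainbowMatching G c (m + 1) P) : ∃ M E, IsExtremalPair G c m M E := by
  let pairs : Set (Finset (Sym2 V) × Finset (Sym2 V)) := {q | IsNRainbowMatching G c m q.1 ∧
    IsRainbowMatching G c q.2 ∧ Disjoint (coveredVerts q.1) (coveredVerts q.2)}
  have hfin : ((fun q ↦ q.2.card) '' pairs).Finite := by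
    refine (Set.finite_le_nat m).subset (Set.image_subset_iff.2 fun q hq ↦ ?_)
    by_contra! hlt
    obtain ⟨P, hP⟩ := hq.2.1.isNRainbowMatching.exists_of_le (Nat.succ_le_of_lt (not_le.1 hlt))
    exact hsucc P hP
  obtain ⟨⟨M', E⟩, hprop, hmax⟩ := hfin.exists_maximalFor' _ _ ⟨(M, ∅), hM, by
    simp [IsRainbowMatching], by simp [coveredVerts]⟩
  refine ⟨M', E, hprop.1, hprop.2.1, hprop.2.2, hsucc, fun P F hP hF hPF ↦ ?_⟩
  exact (le_total _ _).elim id fun hle ↦ hmax (j := (P, F)) ⟨hP, hF, hPF⟩ hle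

lemma exists_maximum_isNRainbowMatching {V : Type*} {G : SimpleGraph V} {c : Sym2 V → ℕ} {k : ℕ}
    (h : ∀ P, ¬ IsNRainbowMatching G c k P) : ∃ m < k, (∃ M, IsNRainbowMatching G c m M) ∧
      ∀ P, ¬ IsNRainbowMatching G c (m + 1) P := by
  by_contra! hsucc
  suffices ∀ m ≤ k, ∃ M, IsNRainbowMatching G c m M from (this k le_rfl).elim h
  intro m
  induction m with
  | zero => exact fun _ ↦ ⟨∅, by simp [IsRainbowMatching], card_empty⟩
  | succ m ih => exact fun hm ↦ hsucc m hm (ih (Nat.le_of_succ_le hm))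

theorem rainbow_matching_of_min_colour_degree_general {V : Type*} (G : SimpleGraph V)
    (c : Sym2 V → ℕ) (k : ℕ) (hk : 4 ≤ k) (hdeg : ∀ v, (k : ℕ∞) ≤ colourEDegree G c v)
    (hn : ((4 * k - 4 : ℕ) : ℕ∞) ≤ ENat.card V) :
    ∃ M : Finset (Sym2 V), IsRainbowMatching G c M ∧ M.card = k := by
  classical
  by_contra! hno
  obtain ⟨m, hmk, ⟨M₀, hM₀⟩, hsucc⟩ := exists_maximum_isNRainbowMatching
    fun P hP ↦ hno P hP.1 hP.2
  obtain ⟨M, E, h⟩ := exists_isExtremalPair hM₀ hsucc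
  have hV : ((4 * m : ℕ) : ℕ∞) ≤ ENat.card V := le_trans (Nat.cast_le.2 (by omega)) hn
  have : Nonempty V := by
    rw [← ENat.one_le_card_iff_nonempty]
    exact le_trans (by exact_mod_cast (by omega : 1 ≤ 4 * k - 4)) hn
  have hdegm : ∀ v, (m : ℕ∞) < colourEDegree G c v := fun v ↦
    (Nat.cast_lt.2 hmk).trans_le (hdeg v)
  have hdeg4 : ∀ v, 4 ≤ colourEDegree G c v := fun v ↦ le_trans (by exact_mod_cast hk) (hdeg v)
  exact h.card_right_ne hdegm hdeg4 (h.right_card_le.antisymm (h.le_card_right hdegm hV))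

/-- If `G` is an edge-coloured graph on `n` vertices with minimum colour degree at least
`k ≥ 4` and `n ≥ 4k - 4`, then `G` contains a rainbow matching of size `k`. -/
theorem rainbow_matching_of_min_colour_degree {V : Type*} [Fintype V]
    (G : SimpleGraph V) (c : Sym2 V → ℕ) (k : ℕ) (hk : 4 ≤ k)
    (hdeg : ∀ v : V, k ≤ colourDegree G c v)
    (hn : 4 * k - 4 ≤ Fintype.card V) :
    ∃ M : Finset (Sym2 V), IsRainbowMatching G c M ∧ M.card = k := by
  refine rainbow_matching_of_min_colour_degree_general G c k hk
    (fun v ↦ (Nat.cast_le.2 (hdeg v)).trans coe_colourDegree_le) ?_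
  rwa [ENat.card_eq_coe_fintype_card, Nat.cast_le]
end

section
/- Let k ≤ 3 be a positive integer and let G be a finite simple graph on n vertices whose edges are coloured (not necessarily properly) by a colouring c. If every vertex of G has colour degree at least k and n ≥ 4k − 3, then G contains a rainbow matching of size k. -/
/-!
Among the matchings that use every colour at most twice, let `F` maximise `2 * #F` plus the number
of its colours, and suppose that it has fewer than `k` colours. An edge whose colour is doubled in
`F` may be exchanged for an edge from one of its ends to an uncovered vertex without losing a
colour. By maximality this gains no colour either, but another colour becomes doubled. Iterating,
one reaches a set `B` of colours, each of which can be made doubled, that is closed in the following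
sense: apart from the few vertices used up on the way, an uncovered vertex sends only edges with
colours in `B` to edges of `F` with colours in `B`. If `s` edges of `F` remain, at least `2 * s + 1`
uncovered vertices are left. Each of them sees more than `s` colours outside `B`, hence two of these
on the edges to the same remaining edge, and this happens to three vertices at one common edge
`s(x, y)`. Maximality forbids that: two disjoint edges from uncovered vertices to `x` and `y` with
new distinct colours could replace `s(x, y)`.
-/

open Finset

section

variable {V : Type*} {G : SimpleGraph V} {c : Sym2 V → ℕ} {F F' : Finset (Sym2 V)}

/-- The vertex `v` lies on no edge of `F`, i.e. `F` does not saturate `v`. -/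
def IsUncovered (F : Finset (Sym2 V)) (v : V) : Prop :=
  ∀ e ∈ F, v ∉ e

/-- The colours that occur on at least two edges of `F`. -/
def doubledColours (c : Sym2 V → ℕ) (F : Finset (Sym2 V)) : Finset ℕ :=
  {i ∈ F.image c | 1 < #{e ∈ F | c e = i}}

/-- A matching of `G`, as a finite set of edges, in which every colour occurs at most twice. -/
structure IsTwofoldRainbowMatching (G : SimpleGraph V) (c : Sym2 V → ℕ) (F : Finset (Sym2 V)) :
    Prop where
  mem_edgeSet : ∀ e ∈ F, e ∈ G.edgeSet
  eq_of_mem : ∀ e ∈ F, ∀ f ∈ F, ∀ v, v ∈ e → v ∈ f → e = f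
  card_colour_le_two : ∀ i, #{e ∈ F | c e = i} ≤ 2

/-- The quantity maximised over all twofold rainbow matchings: a colour occurring once counts
`3`, a colour occurring twice counts `5`. -/
def matchingWeight (c : Sym2 V → ℕ) (F : Finset (Sym2 V)) : ℕ :=
  2 * #F + #(F.image c)

/-- A twofold rainbow matching of maximum weight. -/
structure IsHeaviest (G : SimpleGraph V) (c : Sym2 V → ℕ) (F : Finset (Sym2 V)) : Prop
    extends IsTwofoldRainbowMatching G c F where
  weight_le : ∀ F', IsTwofoldRainbowMatching G c F' → matchingWeight c F' ≤ matchingWeight c F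

theorem IsUncovered.mono {v : V} (h : IsUncovered F v) (hF : F' ⊆ F) : IsUncovered F' v :=
  fun e he => h e (hF he)

theorem card_le_card_filter_isUncovered_add [DecidablePred (IsUncovered F)] (S : Finset V) :
    #S ≤ #{v ∈ S | IsUncovered F v} + 2 * #F := by
  classical
  have hcover : #{v ∈ S | ¬ IsUncovered F v} ≤ 2 * #F := by
    calc #{v ∈ S | ¬ IsUncovered F v}
        ≤ #(F.biUnion Sym2.toFinset) := card_le_card fun v hv => by
          simpa [IsUncovered] using (mem_filter.1 hv).2
      _ ≤ #F * 2 := card_biUnion_le_card_mul _ _ _ fun e _ => by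
          rw [Sym2.card_toFinset]; split_ifs <;> omega
      _ = 2 * #F := mul_comm _ _
  have hsplit := card_filter_add_card_filter_not (s := S) (IsUncovered F ·)
  omega

theorem mem_doubledColours {i : ℕ} :
    i ∈ doubledColours c F ↔ ∃ e ∈ F, ∃ f ∈ F, e ≠ f ∧ c e = i ∧ c f = i := by
  simp only [doubledColours, mem_filter, mem_image, one_lt_card]
  grind

theorem doubledColours_subset_image : doubledColours c F ⊆ F.image c :=
  filter_subset _ _

theorem doubledColours_mono (h : F' ⊆ F) : doubledColours c F' ⊆ doubledColours c F := by
  intro i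
  simp only [mem_doubledColours]
  grind

theorem card_colour_le_one {i : ℕ} (hi : i ∉ doubledColours c F) :
    #{e ∈ F | c e = i} ≤ 1 := by
  rw [mem_doubledColours] at hi
  rw [card_le_one]
  grind

section DecidableEq

variable [DecidableEq V] {e : Sym2 V} {u v : V}

theorem card_insert_edge (hu : IsUncovered F u) : #(insert s(u, v) F) = #F + 1 :=
  card_insert_of_notMem fun h => hu _ h (Sym2.mem_mk_left u v)

theorem card_insert_edge_erase (he : e ∈ F) (hu : IsUncovered F u) :
    #(insert s(u, v) (F.erase e)) = #F := by
  rw [card_insert_edge (hu.mono (erase_subset _ _)), card_erase_add_one he]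

theorem IsUncovered.insert_edge {w : V} (hw : IsUncovered F w) (hu : w ≠ u) (hv : w ≠ v) :
    IsUncovered (insert s(u, v) F) w := by
  intro f hf
  rcases mem_insert.1 hf with rfl | hf
  · simp [hu, hv]
  · exact hw f hf

theorem image_erase_of_mem_doubledColours (he : c e ∈ doubledColours c F) :
    (F.erase e).image c = F.image c := by
  refine (image_subset_image (erase_subset _ _)).antisymm fun i hi => ?_
  rw [mem_doubledColours] at he
  simp only [mem_image, mem_erase] at hi ⊢
  grind

theorem doubledColours_insert_subset (e : Sym2 V) :
    doubledColours c (insert e F) ⊆ insert (c e) (doubledColours c F) := by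
  intro i
  simp only [mem_doubledColours, mem_insert]
  grind

end DecidableEq

namespace IsTwofoldRainbowMatching

theorem empty (G : SimpleGraph V) (c : Sym2 V → ℕ) : IsTwofoldRainbowMatching G c ∅ := by
  constructor <;> simp

theorem subset (hF : IsTwofoldRainbowMatching G c F) (h : F' ⊆ F) :
    IsTwofoldRainbowMatching G c F' where
  mem_edgeSet e he := hF.mem_edgeSet e (h he)
  eq_of_mem e he f hf := hF.eq_of_mem e (h he) f (h hf)
  card_colour_le_two i := (card_le_card (filter_subset_filter _ h)).trans (hF.card_colour_le_two i)

theorem card_le (hF : IsTwofoldRainbowMatching G c F) :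
    #F ≤ #(F.image c) + #(doubledColours c F) := by
  calc #F = ∑ i ∈ F.image c, #{e ∈ F | c e = i} := card_eq_sum_card_image c F
    _ ≤ ∑ i ∈ F.image c, (1 + if 1 < #{e ∈ F | c e = i} then 1 else 0) :=
        sum_le_sum fun i _ => by
          have := hF.card_colour_le_two i
          split_ifs <;> omega
    _ = #(F.image c) + #(doubledColours c F) := by
        rw [sum_add_distrib, ← card_eq_sum_ones, doubledColours, card_filter]

theorem exists_isRainbowMatching (hF : IsTwofoldRainbowMatching G c F) {k : ℕ}
    (hk : k ≤ #(F.image c)) : ∃ M, IsRainbowMatching G c M ∧ #M = k := by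
  obtain ⟨T, hT, rfl⟩ := exists_subset_card_eq hk
  obtain ⟨M, hMF, hinj, rfl⟩ := exists_subset_injOn_image_eq_of_surjOn (f := c) F T
    fun i hi => by simpa using hT hi
  have hM := hF.subset (coe_subset.1 hMF)
  exact ⟨M, ⟨hM.mem_edgeSet, fun e he f hf hne v hv => hne (hM.eq_of_mem e he f hf v hv.1 hv.2),
    fun e he f hf => hinj he hf⟩, (card_image_of_injOn hinj).symm⟩

theorem matchingWeight_le (hF : IsTwofoldRainbowMatching G c F) :
    matchingWeight c F ≤ 5 * #(F.image c) := by
  have hdoubled : #(doubledColours c F) ≤ #(F.image c) := card_le_card doubledColours_subset_image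
  have hcard := hF.card_le
  rw [matchingWeight]
  omega

variable [DecidableEq V] {e : Sym2 V} {u v : V}

theorem isUncovered_erase (hF : IsTwofoldRainbowMatching G c F) (he : e ∈ F) (hv : v ∈ e) :
    IsUncovered (F.erase e) v := by
  intro f hf hvf
  rw [mem_erase] at hf
  exact hf.1 (hF.eq_of_mem f hf.2 e he v hvf hv)

theorem insert_edge (hF : IsTwofoldRainbowMatching G c F) (huv : G.Adj u v)
    (hu : IsUncovered F u) (hv : IsUncovered F v) (hc : c s(u, v) ∉ doubledColours c F) :
    IsTwofoldRainbowMatching G c (insert s(u, v) F) where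
  mem_edgeSet e he := by
    rcases mem_insert.1 he with rfl | he
    exacts [huv, hF.mem_edgeSet e he]
  eq_of_mem e he f hf x hxe hxf := by
    have hnew : ∀ g ∈ F, x ∈ g → x ∉ s(u, v) := by
      intro g hg hxg hx
      rcases Sym2.mem_iff.1 hx with rfl | rfl
      exacts [hu g hg hxg, hv g hg hxg]
    rcases mem_insert.1 he with rfl | he <;> rcases mem_insert.1 hf with rfl | hf
    · rfl
    · exact absurd hxe (hnew f hf hxf)
    · exact absurd hxf (hnew e he hxe)
    · exact hF.eq_of_mem e he f hf x hxe hxf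
  card_colour_le_two i := by
    rw [filter_insert]
    split_ifs with hi
    · have := card_colour_le_one (hi ▸ hc)
      exact (card_insert_le _ _).trans (by omega)
    · exact hF.card_colour_le_two i

theorem exchange (hF : IsTwofoldRainbowMatching G c F) (he : e ∈ F) (hu : IsUncovered F u)
    (hv : v ∈ e) (huv : G.Adj u v) (hc : c s(u, v) ∉ doubledColours c F) :
    IsTwofoldRainbowMatching G c (insert s(u, v) (F.erase e)) :=
  (hF.subset (erase_subset _ _)).insert_edge huv (hu.mono (erase_subset _ _))
    (hF.isUncovered_erase he hv) fun h => hc (doubledColours_mono (erase_subset _ _) h)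

end IsTwofoldRainbowMatching

namespace IsHeaviest

theorem exists_of_card_image_lt {k : ℕ}
    (hk : ∀ F, IsTwofoldRainbowMatching G c F → #(F.image c) < k) : ∃ F, IsHeaviest G c F := by
  have hbdd : BddAbove (matchingWeight c '' {F | IsTwofoldRainbowMatching G c F}) := by
    refine ⟨5 * k, ?_⟩
    rintro _ ⟨F, hF, rfl⟩
    exact hF.matchingWeight_le.trans (by gcongr; exact (hk F hF).le)
  obtain ⟨F, hF, hmax⟩ := Nat.sSup_mem ((Set.nonempty_of_mem (.empty G c)).image _) hbdd
  exact ⟨F, hF, fun F' hF' => hmax ▸ le_csSup hbdd ⟨F', hF', rfl⟩⟩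

theorem colour_mem_doubledColours (hF : IsHeaviest G c F) {w x : V} (hw : IsUncovered F w)
    (hx : IsUncovered F x) (hwx : G.Adj w x) : c s(w, x) ∈ doubledColours c F := by
  classical
  by_contra hc
  have hle := hF.weight_le _ (hF.insert_edge hwx hw hx hc)
  have himage : #(F.image c) ≤ #((insert s(w, x) F).image c) :=
    card_le_card (image_subset_image (subset_insert _ _))
  rw [matchingWeight, matchingWeight, card_insert_edge hw] at hle
  omega

/-- Otherwise replacing `s(x, y)` by the two other edges would gain an edge at the cost of at
most one colour. -/
theorem colour_eq_of_adj (hF : IsHeaviest G c F) {x y w w' : V} (he : s(x, y) ∈ F)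
    (hw : IsUncovered F w) (hw' : IsUncovered F w') (hne : w ≠ w')
    (hwx : G.Adj w x) (hwy : G.Adj w' y)
    (hcx : c s(w, x) ∉ doubledColours c F) (hcy : c s(w', y) ∉ doubledColours c F) :
    c s(w, x) = c s(w', y) := by
  classical
  by_contra hcne
  set F₀ := F.erase s(x, y)
  set F₁ := insert s(w, x) F₀
  have hsub : F₀ ⊆ F := erase_subset _ _
  have hF₁ : IsTwofoldRainbowMatching G c F₁ :=
    hF.exchange he hw (Sym2.mem_mk_left x y) hwx hcx
  have hw'₁ : IsUncovered F₁ w' := (hw'.mono hsub).insert_edge hne.symm <| by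
    rintro rfl
    exact hw' _ he (Sym2.mem_mk_left _ _)
  have hy₁ : IsUncovered F₁ y := by
    refine (hF.isUncovered_erase he (Sym2.mem_mk_right x y)).insert_edge ?_
      (G.ne_of_adj (hF.mem_edgeSet _ he)).symm
    rintro rfl
    exact hw _ he (Sym2.mem_mk_right _ _)
  have hcy₁ : c s(w', y) ∉ doubledColours c F₁ := fun h =>
    (mem_insert.1 (doubledColours_insert_subset _ h)).elim (fun h => hcne h.symm)
      fun h => hcy (doubledColours_mono hsub h)
  have hle := hF.weight_le _ (hF₁.insert_edge hwy hw'₁ hy₁ hcy₁)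
  have himage : #(F.image c) ≤ #((insert s(w', y) F₁).image c) + 1 := by
    calc #(F.image c) = #((insert s(x, y) F₀).image c) := by rw [insert_erase he]
      _ ≤ #(F₀.image c) + 1 := by rw [image_insert]; exact card_insert_le _ _
      _ ≤ #((insert s(w', y) F₁).image c) + 1 := by
          gcongr
          exact (subset_insert _ _).trans (subset_insert _ _)
  rw [matchingWeight, matchingWeight, card_insert_edge hw'₁, card_insert_edge_erase he hw] at hle
  omega

section Exchange

variable {e : Sym2 V} {w x : V}

/-- Otherwise exchanging `e` for `s(w, x)` would gain a colour. -/
theorem colour_mem_image (hF : IsHeaviest G c F) (he : e ∈ F) (hce : c e ∈ doubledColours c F)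
    (hw : IsUncovered F w) (hx : x ∈ e) (hwx : G.Adj w x) : c s(w, x) ∈ F.image c := by
  classical
  by_contra hc
  have hle := hF.weight_le _
    (hF.exchange he hw hx hwx fun h => hc (doubledColours_subset_image h))
  rw [matchingWeight, matchingWeight, card_insert_edge_erase he hw, image_insert,
    image_erase_of_mem_doubledColours hce, card_insert_of_notMem hc] at hle
  omega

variable [DecidableEq V]

theorem image_exchange (hF : IsHeaviest G c F) (he : e ∈ F) (hce : c e ∈ doubledColours c F)
    (hw : IsUncovered F w) (hx : x ∈ e) (hwx : G.Adj w x) :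
    (insert s(w, x) (F.erase e)).image c = F.image c := by
  rw [image_insert, image_erase_of_mem_doubledColours hce,
    insert_eq_of_mem (hF.colour_mem_image he hce hw hx hwx)]

theorem exchange (hF : IsHeaviest G c F) (he : e ∈ F) (hce : c e ∈ doubledColours c F)
    (hw : IsUncovered F w) (hx : x ∈ e) (hwx : G.Adj w x) (hc : c s(w, x) ∉ doubledColours c F) :
    IsHeaviest G c (insert s(w, x) (F.erase e)) where
  toIsTwofoldRainbowMatching := hF.toIsTwofoldRainbowMatching.exchange he hw hx hwx hc
  weight_le F' hF' := by
    rw [matchingWeight, matchingWeight, card_insert_edge_erase he hw,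
      hF.image_exchange he hce hw hx hwx]
    exact hF.weight_le F' hF'

end Exchange

end IsHeaviest

/-- `F'` spares the edge `e` of `F`: it is an equally good matching with the same colours in which
the colour of `e` is doubled, obtained from `F` by changing only edges with colours in `B` and by
using up only uncovered vertices in `U`. -/
structure IsSwitch (G : SimpleGraph V) (c : Sym2 V → ℕ) (F : Finset (Sym2 V)) (B : Finset ℕ)
    (U : Finset V) (e : Sym2 V) (F' : Finset (Sym2 V)) : Prop where
  isHeaviest : IsHeaviest G c F'
  mem : e ∈ F'
  colour_mem_doubledColours : c e ∈ doubledColours c F'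
  doubledColours_subset : doubledColours c F' ⊆ B
  image_eq : F'.image c = F.image c
  mem_of_colour_notMem : ∀ f ∈ F, c f ∉ B → f ∈ F'
  isUncovered : ∀ v, IsUncovered F v → v ∉ U → IsUncovered F' v

/-- Every edge of `F` whose colour lies in `B` can be spared. Each colour of `B` beyond those
doubled in `F` costs at most one vertex of `U`. -/
structure IsSwitchable (G : SimpleGraph V) (c : Sym2 V → ℕ) (F : Finset (Sym2 V)) (B : Finset ℕ)
    (U : Finset V) : Prop where
  doubledColours_subset : doubledColours c F ⊆ B
  subset_image : B ⊆ F.image c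
  card_add_card_le : #U + #(doubledColours c F) ≤ #B
  exists_isSwitch : ∀ e ∈ F, c e ∈ B → ∃ F', IsSwitch G c F B U e F'

variable {B B' : Finset ℕ} {U U' : Finset V} {e : Sym2 V} {w x : V}

theorem IsSwitch.mono (h : IsSwitch G c F B U e F') (hB : B ⊆ B') (hU : U ⊆ U') :
    IsSwitch G c F B' U' e F' where
  __ := h
  doubledColours_subset := h.doubledColours_subset.trans hB
  mem_of_colour_notMem f hf hfB := h.mem_of_colour_notMem f hf fun hf' => hfB (hB hf')
  isUncovered v hv hvU := h.isUncovered v hv fun hv' => hvU (hU hv')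

theorem IsHeaviest.isSwitchable (hF : IsHeaviest G c F) :
    IsSwitchable G c F (doubledColours c F) ∅ where
  doubledColours_subset := Subset.rfl
  subset_image := doubledColours_subset_image
  card_add_card_le := by simp
  exists_isSwitch e he hce := ⟨F, hF, he, hce, Subset.rfl, rfl, fun _ hf _ => hf, fun _ hv _ => hv⟩

theorem IsSwitch.colour_mem_image (h : IsSwitch G c F B U e F') (hw : IsUncovered F w)
    (hwU : w ∉ U) (hx : x ∈ e) (hwx : G.Adj w x) : c s(w, x) ∈ F.image c :=
  h.image_eq ▸ h.isHeaviest.colour_mem_image h.mem h.colour_mem_doubledColours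
    (h.isUncovered w hw hwU) hx hwx

theorem IsSwitch.exchange [DecidableEq V] (h : IsSwitch G c F B U e F') (heB : c e ∈ B)
    (hw : IsUncovered F w) (hwU : w ∉ U) (hx : x ∈ e) (hwx : G.Adj w x) (hc : c s(w, x) ∉ B)
    {f : Sym2 V} (hf : f ∈ F) (hcf : c f = c s(w, x)) :
    IsSwitch G c F (insert (c s(w, x)) B) (insert w U) f (insert s(w, x) (F'.erase e)) := by
  have hw' : IsUncovered F' w := h.isUncovered w hw hwU
  have hfF' : f ∈ F' := h.mem_of_colour_notMem f hf (hcf ▸ hc)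
  have hfe : f ≠ e := fun hfe => hc (hcf ▸ hfe ▸ heB)
  have hfwx : f ≠ s(w, x) := fun hfwx => hw' f hfF' (hfwx ▸ Sym2.mem_mk_left w x)
  refine ⟨h.isHeaviest.exchange h.mem h.colour_mem_doubledColours hw' hx hwx
    fun hd => hc (h.doubledColours_subset hd), by simp [hfF', hfe], ?_, ?_, ?_, ?_, ?_⟩
  · exact mem_doubledColours.2
      ⟨f, by simp [hfF', hfe], s(w, x), mem_insert_self _ _, hfwx, rfl, hcf.symm⟩
  · exact (doubledColours_insert_subset _).trans (insert_subset_insert _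
      ((doubledColours_mono (erase_subset _ _)).trans h.doubledColours_subset))
  · rw [h.isHeaviest.image_exchange h.mem h.colour_mem_doubledColours hw' hx hwx, h.image_eq]
  · intro g hg hgB
    have hgF' := h.mem_of_colour_notMem g hg fun hgB' => hgB (mem_insert_of_mem hgB')
    have hge : g ≠ e := fun hge => hgB (mem_insert_of_mem (hge ▸ heB))
    exact mem_insert_of_mem (mem_erase.2 ⟨hge, hgF'⟩)
  · intro v hv hvU
    rw [mem_insert, not_or] at hvU
    have hv' := h.isUncovered v hv hvU.2
    refine (hv'.mono (erase_subset _ _)).insert_edge hvU.1 ?_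
    rintro rfl
    exact hv' e h.mem hx

theorem IsSwitchable.insert [DecidableEq V] (h : IsSwitchable G c F B U) (he : e ∈ F)
    (heB : c e ∈ B) (hw : IsUncovered F w) (hwU : w ∉ U) (hx : x ∈ e) (hwx : G.Adj w x)
    (hc : c s(w, x) ∉ B) : IsSwitchable G c F (insert (c s(w, x)) B) (insert w U) := by
  obtain ⟨F', hF'⟩ := h.exists_isSwitch e he heB
  refine ⟨h.doubledColours_subset.trans (subset_insert _ _),
    insert_subset (hF'.colour_mem_image hw hwU hx hwx) h.subset_image, ?_, fun f hf hfB => ?_⟩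
  · have := h.card_add_card_le
    have := card_insert_le w U
    rw [card_insert_of_notMem hc]
    omega
  · rcases mem_insert.1 hfB with hcf | hfB
    · exact ⟨_, hF'.exchange heB hw hwU hx hwx hc hf hcf⟩
    · obtain ⟨F'', hF''⟩ := h.exists_isSwitch f hf hfB
      exact ⟨F'', hF''.mono (subset_insert _ _) (subset_insert _ _)⟩

theorem IsHeaviest.exists_isSwitchable_closed (hF : IsHeaviest G c F) :
    ∃ B U, IsSwitchable G c F B U ∧
      ∀ w, IsUncovered F w → w ∉ U → ∀ e ∈ F, c e ∈ B → ∀ x ∈ e, G.Adj w x → c s(w, x) ∈ B := by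
  classical
  have hfin : {B | ∃ U, IsSwitchable G c F B U}.Finite :=
    (finite_toSet (F.image c).powerset).subset fun B ⟨U, hU⟩ =>
      mem_coe.2 (mem_powerset.2 hU.subset_image)
  obtain ⟨B, ⟨U, hBU⟩, hmax⟩ := hfin.exists_maximal ⟨_, ∅, hF.isSwitchable⟩
  refine ⟨B, U, hBU, fun w hw hwU e he heB x hx hwx => ?_⟩
  by_contra hc
  exact hc (hmax ⟨_, hBU.insert he heB hw hwU hx hwx hc⟩ (subset_insert _ _) (mem_insert_self _ _))

/-- The vertex `w` is joined to both ends of `e` by edges of distinct colours, neither of them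
in `B`. -/
structure IsBichromatic (G : SimpleGraph V) (c : Sym2 V → ℕ) (B : Finset ℕ) (w : V) (e : Sym2 V) :
    Prop where
  adj : ∀ x ∈ e, G.Adj w x
  colour_notMem : ∀ x ∈ e, c s(w, x) ∉ B
  colour_injOn : ∀ x ∈ e, ∀ y ∈ e, c s(w, x) = c s(w, y) → x = y

theorem exists_isBichromatic {R : Finset (Sym2 V)} (hcard : #R + #B < colourDegree G c w)
    (hR : ∀ x, G.Adj w x → c s(w, x) ∉ B → ∃ e ∈ R, x ∈ e) :
    ∃ e ∈ R, IsBichromatic G c B w e := by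
  classical
  have hfin : (c '' G.incidenceSet w).Finite := Set.finite_of_ncard_pos (by
    rw [colourDegree] at hcard; omega)
  have hlt : #R < #(hfin.toFinset \ B) := by
    have := le_card_sdiff B hfin.toFinset
    rw [colourDegree, Set.ncard_eq_toFinset_card _ hfin] at hcard
    omega
  have hend : ∀ i ∈ hfin.toFinset \ B, ∃ x, G.Adj w x ∧ c s(w, x) = i ∧ ∃ e ∈ R, x ∈ e := by
    intro i hi
    obtain ⟨hi, hiB⟩ := mem_sdiff.1 hi
    obtain ⟨f, ⟨hfG, hwf⟩, rfl⟩ := hfin.mem_toFinset.1 hi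
    obtain ⟨x, rfl⟩ := Sym2.mem_iff_exists.1 hwf
    exact ⟨x, hfG, rfl, hR x hfG hiB⟩
  have : Nonempty V := ⟨w⟩
  have : Nonempty (Sym2 V) := ⟨s(w, w)⟩
  choose! x hwx hcx e he hxe using hend
  obtain ⟨i, hi, j, hj, hij, heij⟩ := exists_ne_map_eq_of_card_lt_of_maps_to hlt he
  have hne : x i ≠ x j := fun h => hij <| by rw [← hcx i hi, h, hcx j hj]
  have hmem : ∀ y ∈ e i, y = x i ∨ y = x j := by
    rw [(Sym2.mem_and_mem_iff hne).1 ⟨hxe i hi, heij ▸ hxe j hj⟩]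
    simp
  have hiB := (mem_sdiff.1 hi).2
  have hjB := (mem_sdiff.1 hj).2
  exact ⟨e i, he i hi, by grind, by grind, by grind⟩

/-- Among three vertices `u`, `v`, `w`, the colours at the ends `x`, `y` of `e` would satisfy
`c(ux) = c(wy) = c(vx) = c(uy)`. -/
theorem IsHeaviest.card_isBichromatic_le_two (hF : IsHeaviest G c F) (he : e ∈ F)
    (hB : doubledColours c F ⊆ B) {T : Finset V} (hT : ∀ w ∈ T, IsUncovered F w)
    (hbi : ∀ w ∈ T, IsBichromatic G c B w e) : #T ≤ 2 := by
  by_contra! hcard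
  obtain ⟨u, hu, v, hv, w, hw, huv, huw, hvw⟩ := two_lt_card.1 hcard
  induction e with | _ x y
  have hx := Sym2.mem_mk_left x y
  have hy := Sym2.mem_mk_right x y
  have hcross : ∀ a ∈ T, ∀ b ∈ T, a ≠ b → c s(a, x) = c s(b, y) := fun a ha b hb hab =>
    hF.colour_eq_of_adj he (hT a ha) (hT b hb) hab ((hbi a ha).adj x hx) ((hbi b hb).adj y hy)
      (fun h => (hbi a ha).colour_notMem x hx (hB h))
      (fun h => (hbi b hb).colour_notMem y hy (hB h))
  have hux : c s(u, x) = c s(u, y) :=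
    calc c s(u, x) = c s(w, y) := hcross u hu w hw huw
      _ = c s(v, x) := (hcross v hv w hw hvw).symm
      _ = c s(u, y) := hcross v hv u hu huv.symm
  exact G.ne_of_adj (hF.mem_edgeSet _ he) ((hbi u hu).colour_injOn x hx y hy hux)

theorem IsSwitchable.card_filter_notMem_add (h : IsSwitchable G c F B U) :
    #{e ∈ F | c e ∉ B} + #B = #(F.image c) := by
  have hinj : Set.InjOn c {e ∈ F | c e ∉ B} := by
    intro e he f hf hef
    by_contra hne
    exact he.2 (h.doubledColours_subset
      (mem_doubledColours.2 ⟨e, he.1, f, hf.1, hne, rfl, hef.symm⟩))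
  have himage : ({e ∈ F | c e ∉ B} : Finset _).image c = F.image c \ B := by
    ext i
    simp only [mem_image, mem_filter, mem_sdiff]
    grind
  rw [← card_image_of_injOn (f := c) (by simpa using hinj), himage,
    card_sdiff_add_card_eq_card h.subset_image]

theorem IsHeaviest.le_card_image (hF : IsHeaviest G c F) {k : ℕ} {S : Finset V}
    (hdeg : ∀ v ∈ S, k ≤ colourDegree G c v) (hS : 4 * k - 3 ≤ #S) : k ≤ #(F.image c) := by
  classical
  by_contra! hlt
  obtain ⟨B, U, hBU, hclosed⟩ := hF.exists_isSwitchable_closed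
  set R : Finset (Sym2 V) := {e ∈ F | c e ∉ B}
  set W : Finset V := {v ∈ S | IsUncovered F v} \ U
  have hRB : #R + #B = #(F.image c) := hBU.card_filter_notMem_add
  have hW : ∀ w ∈ W, w ∈ S ∧ IsUncovered F w ∧ w ∉ U := by simp [W, and_assoc]
  have hRW : #R * 2 < #W := by
    have hcover : #S ≤ #{v ∈ S | IsUncovered F v} + 2 * #F :=
      card_le_card_filter_isUncovered_add S
    have hsdiff : #{v ∈ S | IsUncovered F v} - #U ≤ #W := le_card_sdiff _ _
    have hcardF : #F ≤ #(F.image c) + #(doubledColours c F) := hF.card_le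
    have hcardU : #U + #(doubledColours c F) ≤ #B := hBU.card_add_card_le
    omega
  have hbi : ∀ w ∈ W, ∃ e ∈ R, IsBichromatic G c B w e := by
    intro w hw
    obtain ⟨hwS, hwF, hwU⟩ := hW w hw
    refine exists_isBichromatic (by have := hdeg w hwS; omega) fun x hwx hcB => ?_
    obtain ⟨e, he, hxe⟩ : ∃ e ∈ F, x ∈ e := by
      by_contra! hx
      exact hcB (hBU.doubledColours_subset (hF.colour_mem_doubledColours hwF hx hwx))
    exact ⟨e, mem_filter.2 ⟨he, fun heB => hcB (hclosed w hwF hwU e he heB x hxe hwx)⟩, hxe⟩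
  obtain ⟨w₀, -⟩ := card_pos.1 (Nat.zero_lt_of_lt hRW)
  have : Nonempty (Sym2 V) := ⟨s(w₀, w₀)⟩
  choose! f hfR hf using hbi
  obtain ⟨e, he, hcard⟩ := exists_lt_card_fiber_of_mul_lt_card_of_maps_to hfR hRW
  refine hcard.not_ge (hF.card_isBichromatic_le_two (mem_filter.1 he).1 hBU.doubledColours_subset
    (fun w hw => (hW w (mem_filter.1 hw).1).2.1) fun w hw => ?_)
  obtain ⟨hwW, rfl⟩ := mem_filter.1 hw
  exact hf w hwW

end

theorem rainbow_matching_of_min_colour_degree_small_k_general {V : Type*} (G : SimpleGraph V)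
    (c : Sym2 V → ℕ) (k : ℕ) (S : Finset V) (hdeg : ∀ v ∈ S, k ≤ colourDegree G c v)
    (hS : 4 * k - 3 ≤ #S) : ∃ M : Finset (Sym2 V), IsRainbowMatching G c M ∧ #M = k := by
  by_contra hno
  have hfew : ∀ F, IsTwofoldRainbowMatching G c F → #(F.image c) < k := by
    intro F hF
    by_contra! hk
    exact hno (hF.exists_isRainbowMatching hk)
  obtain ⟨F, hF⟩ := IsHeaviest.exists_of_card_image_lt hfew
  exact (hF.le_card_image hdeg hS).not_gt (hfew F hF.toIsTwofoldRainbowMatching)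

/-- If `G` is an edge-coloured graph on `n` vertices with minimum colour degree at least
`k`, where `1 ≤ k ≤ 3`, and `n ≥ 4k - 3`, then `G` contains a rainbow matching of size
`k`. -/
theorem rainbow_matching_of_min_colour_degree_small_k {V : Type*} [Fintype V]
    (G : SimpleGraph V) (c : Sym2 V → ℕ) (k : ℕ) (hk0 : 1 ≤ k) (hk : k ≤ 3)
    (hdeg : ∀ v : V, k ≤ colourDegree G c v)
    (hn : 4 * k - 3 ≤ Fintype.card V) :
    ∃ M : Finset (Sym2 V), IsRainbowMatching G c M ∧ M.card = k :=
  rainbow_matching_of_min_colour_degree_small_k_general G c k univ (fun v _ => hdeg v) hn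
end
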